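/- Parabolic Poincaré inequality, superquadratic case: Let p ≥ 2 and u be a weak solution of ∂_t(|u|^{p-2}u) − div A(x,t,u,Du) = div(|F|^{p-2}F) in Ω_T. Then on any cylinder Q_ρ^{(μ)}(z_o) ⊆ Ω_T with ρ, μ > 0 that is both μ-sub-intrinsic and μ-super-intrinsic with constant K, for any q ∈ [p−1,p] one has ⨍⨍_{Q_ρ^{(μ)}(z_o)} |u − (u)_{z_o;ρ}^{(μ)}|^q/(μ^{q(2−p)/p}ρ^q) dx dt ≤ c ⨍⨍_{Q_ρ^{(μ)}(z_o)} (|Du|^q + |F|^q) dx dt, where c = c(n,p,L,K). -/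

import Mathlib

open MeasureTheory Set Filter
open scoped ENNReal Topology BigOperators

noncomputable section

abbrev Spc (n : ℕ) := EuclideanSpace ℝ (Fin n)
abbrev Vec (N : ℕ) := EuclideanSpace ℝ (Fin N)
abbrev Mat (N n : ℕ) := EuclideanSpace ℝ (Fin N × Fin n)

variable {n N : ℕ}

/-- Spatial partial derivative in direction `j` of a scalar function on space-time. -/
def pderivS (j : Fin n) (f : Spc n × ℝ → ℝ) (z : Spc n × ℝ) : ℝ :=
  fderiv ℝ (fun y => f (y, z.2)) z.1 (EuclideanSpace.single j 1)

/-- Time derivative of a vector-valued function on space-time. -/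
def tderiv (φ : Spc n × ℝ → Vec N) (z : Spc n × ℝ) : Vec N :=
  deriv (fun s => φ (z.1, s)) z.2

/-- Pairing `M · Dφ = ∑_{i,j} M_{ij} ∂_j φ_i` of a matrix field with the spatial gradient of a
test function. -/
def gradPair (M : Spc n × ℝ → Mat N n) (φ : Spc n × ℝ → Vec N) (z : Spc n × ℝ) : ℝ :=
  ∑ i : Fin N, ∑ j : Fin n, M z (i, j) * pderivS j (fun w => φ w i) z

/-- The power `w^⟨α⟩ := |w|^{α-1} w` of a vector. -/
def pw (α : ℝ) (w : Vec N) : Vec N := ‖w‖ ^ (α - 1) • w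

/-- Weak solution of the doubly nonlinear system
`∂_t(|u|^{p-2}u) − div A(x,t,u,Du) = div(|F|^{p-2}F)` in `Ω_T = Ω × (0,T)`. -/
structure WeakSolution (p ν L T : ℝ) (Ω : Set (Spc n))
    (A : Spc n × ℝ → Vec N → Mat N n → Mat N n)
    (F : Spc n × ℝ → Mat N n)
    (u : Spc n × ℝ → Vec N) (Du : Spc n × ℝ → Mat N n) : Prop where
  hn : 1 ≤ n
  hT : 0 < T
  openΩ : IsOpen Ω
  bddΩ : Bornology.IsBounded Ω
  connΩ : IsConnected Ω
  hν : 0 < ν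
  hνL : ν ≤ L
  measA : ∀ (v : Vec N) (ξ : Mat N n), Measurable fun z => A z v ξ
  contA : ∀ᵐ z ∂(volume.restrict (Ω ×ˢ Ioo 0 T)),
    Continuous fun q : Vec N × Mat N n => A z q.1 q.2
  coercivity : ∀ᵐ z ∂(volume.restrict (Ω ×ˢ Ioo 0 T)),
    ∀ (v : Vec N) (ξ : Mat N n), ν * ‖ξ‖ ^ p ≤ (inner ℝ (A z v ξ) ξ : ℝ)
  growth : ∀ᵐ z ∂(volume.restrict (Ω ×ˢ Ioo 0 T)),
    ∀ (v : Vec N) (ξ : Mat N n), ‖A z v ξ‖ ≤ L * ‖ξ‖ ^ (p - 1)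
  measu : Measurable u
  measDu : Measurable Du
  measF : Measurable F
  memLp_u : MemLp u (ENNReal.ofReal p) (volume.restrict (Ω ×ˢ Ioo 0 T))
  memLp_Du : MemLp Du (ENNReal.ofReal p) (volume.restrict (Ω ×ˢ Ioo 0 T))
  memLp_F : MemLp F (ENNReal.ofReal p) (volume.restrict (Ω ×ˢ Ioo 0 T))
  sliceLp : ∀ t ∈ Icc (0:ℝ) T,
    MemLp (fun x => u (x, t)) (ENNReal.ofReal p) (volume.restrict Ω)
  timeCont : ∀ t₀ ∈ Icc (0:ℝ) T,
    Tendsto (fun t => ∫ x in Ω, ‖u (x, t) - u (x, t₀)‖ ^ p) (𝓝[Icc (0:ℝ) T] t₀) (𝓝 0)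
  weakGrad : ∀ ψ : Spc n × ℝ → ℝ, ContDiff ℝ (⊤ : ℕ∞) ψ → HasCompactSupport ψ →
    tsupport ψ ⊆ Ω ×ˢ Ioo 0 T → ∀ (i : Fin N) (j : Fin n),
      ∫ z in Ω ×ˢ Ioo 0 T, u z i * pderivS j ψ z
        = - ∫ z in Ω ×ˢ Ioo 0 T, Du z (i, j) * ψ z
  weakForm : ∀ φ : Spc n × ℝ → Vec N, ContDiff ℝ (⊤ : ℕ∞) φ → HasCompactSupport φ →
    tsupport φ ⊆ Ω ×ˢ Ioo 0 T →
      ∫ z in Ω ×ˢ Ioo 0 T,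
        (‖u z‖ ^ (p - 2) * (inner ℝ (u z) (tderiv φ z) : ℝ)
          - gradPair (fun w => A w (u w) (Du w)) φ z)
        = ∫ z in Ω ×ˢ Ioo 0 T, ‖F z‖ ^ (p - 2) * gradPair F φ z

/-- The scaled parabolic cylinder `Q_ρ^{(μ)}(z₀)`:
`B_ρ(x₀) × (t₀ − μ^{p−2}ρ^p, t₀ + μ^{p−2}ρ^p)` if `p < 2`, and
`B_{μ^{(2−p)/p}ρ}(x₀) × (t₀ − ρ^p, t₀ + ρ^p)` if `p ≥ 2`. -/
def parCyl (p μ ρ : ℝ) (z₀ : Spc n × ℝ) : Set (Spc n × ℝ) :=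
  if p < 2 then
    Metric.ball z₀.1 ρ ×ˢ Ioo (z₀.2 - μ ^ (p - 2) * ρ ^ p) (z₀.2 + μ ^ (p - 2) * ρ ^ p)
  else
    Metric.ball z₀.1 (μ ^ ((2 - p) / p) * ρ) ×ˢ Ioo (z₀.2 - ρ ^ p) (z₀.2 + ρ ^ p)

/-- `Q_ρ^{(μ)}(z₀)` is `μ`-sub-intrinsic with constant `K`:
`⨍⨍ |u|^p/(μ^{2−𝔭}ρ^p) ≤ K μ^p ⨍⨍ (|Du|^p + |F|^p)`, where `𝔭 = max{p,2}`. -/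
def SubIntrinsic (p K μ ρ : ℝ) (z₀ : Spc n × ℝ) (u : Spc n × ℝ → Vec N)
    (Du F : Spc n × ℝ → Mat N n) : Prop :=
  ⨍ z in parCyl p μ ρ z₀, ‖u z‖ ^ p / (μ ^ (2 - max p 2) * ρ ^ p)
    ≤ K * μ ^ p * ⨍ z in parCyl p μ ρ z₀, (‖Du z‖ ^ p + ‖F z‖ ^ p)

/-- `Q_ρ^{(μ)}(z₀)` is `μ`-super-intrinsic with constant `K`:
either `μ^p ⨍⨍ (|Du|^p + |F|^p) ≤ K ⨍⨍ |u|^p/(μ^{2−𝔭}ρ^p)` or `μ^p ≤ K`. -/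
def SuperIntrinsic (p K μ ρ : ℝ) (z₀ : Spc n × ℝ) (u : Spc n × ℝ → Vec N)
    (Du F : Spc n × ℝ → Mat N n) : Prop :=
  (μ ^ p * ⨍ z in parCyl p μ ρ z₀, (‖Du z‖ ^ p + ‖F z‖ ^ p)
      ≤ K * ⨍ z in parCyl p μ ρ z₀, ‖u z‖ ^ p / (μ ^ (2 - max p 2) * ρ ^ p))
    ∨ μ ^ p ≤ K

theorem add_rpow_le_two_rpow_mul {a b s : ℝ} (ha : 0 ≤ a) (hb : 0 ≤ b) (hs : 0 ≤ s) :
    (a + b) ^ s ≤ 2 ^ s * (a ^ s + b ^ s) := by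
  have hm : a + b ≤ 2 * max a b := by
    linarith [le_max_left a b, le_max_right a b]
  have hm0 : 0 ≤ max a b := ha.trans (le_max_left a b)
  calc (a + b) ^ s ≤ (2 * max a b) ^ s := Real.rpow_le_rpow (by positivity) hm hs
    _ = 2 ^ s * max a b ^ s := Real.mul_rpow (by norm_num) hm0
    _ ≤ 2 ^ s * (a ^ s + b ^ s) := by
      gcongr
      rcases max_cases a b with h | h <;> rw [h.1] <;>
        linarith [Real.rpow_nonneg ha s, Real.rpow_nonneg hb s]

theorem abs_rpow_sub_rpow_mul_le {a b s : ℝ} (ha : 0 ≤ a) (hb : 0 ≤ b) (hs : 0 ≤ s) :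
    |a ^ s - b ^ s| * b ≤ (s + 1) * (max a b) ^ s * |a - b| := by
  have bern : ∀ x y : ℝ, 0 ≤ x → x ≤ y → y ^ s * y - x ^ s * x ≤ (s + 1) * y ^ s * (y - x) := by
    intro x y hx hxy
    rcases eq_or_lt_of_le (hx.trans hxy) with h0 | hy
    · have : x = 0 := by linarith
      subst this; subst h0; simp
    · have h1 := one_add_mul_self_le_rpow_one_add (s := x / y - 1) (p := s + 1)
        (by have : 0 ≤ x / y := by positivity
            linarith) (by linarith)
      have h2 : (1 + (x / y - 1)) ^ (s + 1) = x ^ s * x / (y ^ s * y) := by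
        rw [add_sub_cancel, Real.div_rpow hx hy.le, Real.rpow_add_one' hx (by linarith),
          Real.rpow_add_one' hy.le (by linarith)]
      rw [h2] at h1
      have hys : 0 < y ^ s * y := by positivity
      rw [le_div_iff₀ hys] at h1
      have h3 : (1 + (s + 1) * (x / y - 1)) * (y ^ s * y)
          = y ^ s * y + (s + 1) * y ^ s * (x - y) := by
        field_simp
      nlinarith
  rcases le_total a b with h | h
  · rw [max_eq_right h, abs_of_nonpos (by linarith [Real.rpow_le_rpow ha h hs]),
      abs_of_nonpos (by linarith)]
    have := bern a b ha h
    have h5 : a ^ s * a ≤ a ^ s * b := mul_le_mul_of_nonneg_left h (by positivity)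
    nlinarith
  · rw [max_eq_left h, abs_of_nonneg (by linarith [Real.rpow_le_rpow hb h hs]),
      abs_of_nonneg (by linarith)]
    have := bern b a hb h
    have h5 : a ^ s * b ≤ a ^ s * a := mul_le_mul_of_nonneg_left h (by positivity)
    nlinarith

section PowerMap
variable {V : Type*} [NormedAddCommGroup V] [InnerProductSpace ℝ V]

theorem rpow_add_rpow_mul_norm_sub_le (a b : V) {s : ℝ} (hs : 0 ≤ s) :
    (‖a‖ ^ s + ‖b‖ ^ s) * ‖a - b‖ ≤ 2 * ‖‖a‖ ^ s • a - ‖b‖ ^ s • b‖ := by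
  rcases eq_or_ne a b with rfl | hab
  · simp
  have hpos : 0 < ‖a - b‖ := norm_pos_iff.2 (sub_ne_zero.2 hab)
  have h1 : inner ℝ (‖a‖ ^ s • a - ‖b‖ ^ s • b) (a - b)
      ≤ ‖‖a‖ ^ s • a - ‖b‖ ^ s • b‖ * ‖a - b‖ := real_inner_le_norm _ _
  have h2 : 2 * inner ℝ (‖a‖ ^ s • a - ‖b‖ ^ s • b) (a - b)
      = (‖a‖ ^ s + ‖b‖ ^ s) * ‖a - b‖ ^ 2
        + (‖a‖ ^ s - ‖b‖ ^ s) * (‖a‖ ^ 2 - ‖b‖ ^ 2) := by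
    rw [@norm_sub_sq_real]
    simp only [inner_sub_left, inner_sub_right, real_inner_smul_left, real_inner_self_eq_norm_sq,
      real_inner_comm a b]
    ring
  have h3 : 0 ≤ (‖a‖ ^ s - ‖b‖ ^ s) * (‖a‖ ^ 2 - ‖b‖ ^ 2) := by
    rcases le_total ‖a‖ ‖b‖ with h | h
    · apply mul_nonneg_of_nonpos_of_nonpos
      · linarith [Real.rpow_le_rpow (norm_nonneg a) h hs]
      · nlinarith [norm_nonneg a]
    · apply mul_nonneg
      · linarith [Real.rpow_le_rpow (norm_nonneg b) h hs]
      · nlinarith [norm_nonneg b]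
  refine le_of_mul_le_mul_right ?_ hpos
  nlinarith

theorem norm_sub_rpow_le (a b : V) {s : ℝ} (hs : 0 ≤ s) :
    ‖a - b‖ ^ (s + 1) ≤ 2 ^ (s + 1) * ‖‖a‖ ^ s • a - ‖b‖ ^ s • b‖ := by
  have h1 := rpow_add_rpow_mul_norm_sub_le a b hs
  have h2 : ‖a - b‖ ^ s ≤ 2 ^ s * (‖a‖ ^ s + ‖b‖ ^ s) :=
    (Real.rpow_le_rpow (norm_nonneg _) (norm_sub_le a b) hs).trans
      (add_rpow_le_two_rpow_mul (norm_nonneg a) (norm_nonneg b) hs)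
  rw [Real.rpow_add_one' (norm_nonneg _) (by linarith),
    Real.rpow_add_one' (by norm_num) (by linarith)]
  calc ‖a - b‖ ^ s * ‖a - b‖ ≤ 2 ^ s * (‖a‖ ^ s + ‖b‖ ^ s) * ‖a - b‖ := by gcongr
    _ = 2 ^ s * ((‖a‖ ^ s + ‖b‖ ^ s) * ‖a - b‖) := by ring
    _ ≤ 2 ^ s * (2 * ‖‖a‖ ^ s • a - ‖b‖ ^ s • b‖) := by gcongr
    _ = _ := by ring

theorem norm_rpow_smul_sub_le (a b : V) {s : ℝ} (hs : 0 ≤ s) :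
    ‖‖a‖ ^ s • a - ‖b‖ ^ s • b‖
      ≤ (s + 2) * 2 ^ s * (‖a - b‖ ^ (s + 1) + ‖b‖ ^ s * ‖a - b‖) := by
  have e : ‖a‖ ^ s • a - ‖b‖ ^ s • b = ‖a‖ ^ s • (a - b) + (‖a‖ ^ s - ‖b‖ ^ s) • b := by
    module
  have h1 : |‖a‖ ^ s - ‖b‖ ^ s| * ‖b‖ ≤ (s + 1) * (max ‖a‖ ‖b‖) ^ s * ‖a - b‖ :=
    (abs_rpow_sub_rpow_mul_le (norm_nonneg a) (norm_nonneg b) hs).trans (by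
      gcongr
      exact abs_norm_sub_norm_le a b)
  have h2 : ‖a‖ ^ s ≤ (max ‖a‖ ‖b‖) ^ s :=
    Real.rpow_le_rpow (norm_nonneg _) (le_max_left _ _) hs
  have h3 : (max ‖a‖ ‖b‖) ^ s ≤ 2 ^ s * (‖a - b‖ ^ s + ‖b‖ ^ s) := by
    refine le_trans (Real.rpow_le_rpow (by positivity) ?_ hs)
      (add_rpow_le_two_rpow_mul (norm_nonneg _) (norm_nonneg _) hs)
    refine max_le ?_ (by linarith [norm_nonneg (a - b)])
    calc ‖a‖ = ‖(a - b) + b‖ := by simp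
      _ ≤ _ := norm_add_le _ _
  calc ‖‖a‖ ^ s • a - ‖b‖ ^ s • b‖ ≤ ‖a‖ ^ s * ‖a - b‖ + |‖a‖ ^ s - ‖b‖ ^ s| * ‖b‖ := by
        rw [e]
        refine (norm_add_le _ _).trans_eq ?_
        rw [norm_smul, norm_smul, Real.norm_of_nonneg (by positivity), Real.norm_eq_abs]
    _ ≤ (max ‖a‖ ‖b‖) ^ s * ‖a - b‖ + (s + 1) * (max ‖a‖ ‖b‖) ^ s * ‖a - b‖ := by gcongr
    _ = (s + 2) * ((max ‖a‖ ‖b‖) ^ s * ‖a - b‖) := by ring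
    _ ≤ (s + 2) * (2 ^ s * (‖a - b‖ ^ s + ‖b‖ ^ s) * ‖a - b‖) := by gcongr
    _ = _ := by
      rw [Real.rpow_add_one' (norm_nonneg _) (by linarith)]; ring

theorem exists_rpow_smul_eq (g : V) {s : ℝ} (hs : 0 ≤ s) : ∃ a : V, ‖a‖ ^ s • a = g := by
  rcases eq_or_ne g 0 with rfl | hg
  · exact ⟨0, by simp⟩
  have hpos : 0 < ‖g‖ := norm_pos_iff.2 hg
  refine ⟨‖g‖ ^ (1 / (s + 1) - 1) • g, ?_⟩
  rw [norm_smul, Real.norm_of_nonneg (by positivity), smul_smul]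
  have : (‖g‖ ^ (1 / (s + 1) - 1) * ‖g‖) = ‖g‖ ^ (1 / (s + 1)) := by
    rw [← Real.rpow_add_one hpos.ne']; ring_nf
  rw [this, ← Real.rpow_mul hpos.le, ← Real.rpow_add hpos]
  have : 1 / (s + 1) * s + (1 / (s + 1) - 1) = 0 := by field_simp; ring
  rw [this]; simp

end PowerMap

theorem le_mul_of_rpow_add_le {X Y m s C : ℝ} (hY : 0 ≤ Y) (hm : 0 ≤ m) (hs : 0 ≤ s)
    (hC : 1 ≤ C) (h : X ^ (s + 1) + m ^ s * X ≤ C * (Y ^ (s + 1) + m ^ s * Y)) : X ≤ C * Y := by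
  by_contra! hlt
  have h1 : (C * Y) ^ (s + 1) < X ^ (s + 1) :=
    Real.rpow_lt_rpow (by positivity) hlt (by linarith)
  rw [Real.mul_rpow (by linarith) hY] at h1
  have h2 : C ≤ C ^ (s + 1) := by
    simpa using Real.rpow_le_rpow_of_exponent_le hC (by linarith : (1 : ℝ) ≤ s + 1)
  have h3 : C * Y ^ (s + 1) ≤ C ^ (s + 1) * Y ^ (s + 1) := by gcongr
  have h4 : m ^ s * (C * Y) ≤ m ^ s * X := by gcongr
  nlinarith

section WeakLineDeriv
variable {E W : Type*} [NormedAddCommGroup E] [NormedSpace ℝ E] [FiniteDimensional ℝ E]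
  [MeasurableSpace E] [BorelSpace E] [NormedAddCommGroup W]

theorem integrable_translate_prod {m : Measure E} [m.IsAddHaarMeasure] {f : E → W}
    (hm : StronglyMeasurable f) (hf : Integrable f m) (v : E) :
    Integrable (fun y : E × ℝ => f (y.1 + y.2 • v))
      (m.prod (volume.restrict (Ioc (0 : ℝ) 1))) := by
  have hmeas : StronglyMeasurable (fun y : E × ℝ => f (y.1 + y.2 • v)) :=
    hm.comp_measurable (by fun_prop)
  rw [integrable_prod_iff' hmeas.aestronglyMeasurable]
  refine ⟨Eventually.of_forall fun s => hf.comp_add_right (s • v), ?_⟩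
  simp_rw [integral_add_right_eq_self (fun x => ‖f x‖)]
  exact integrable_const _

theorem ae_sub_eq_integral_of_weak_lineDeriv [NormedSpace ℝ W] [CompleteSpace W]
    {m : Measure E} [m.IsAddHaarMeasure] {f f' : E → W}
    {U : Set E} (hU : IsOpen U) (hUc : Convex ℝ U) (hf : Integrable f m)
    (hm' : StronglyMeasurable f') (hf' : Integrable f' m) (v : E)
    (h : ∀ ψ : E → ℝ, ContDiff ℝ (⊤ : ℕ∞) ψ → HasCompactSupport ψ → tsupport ψ ⊆ U →
      ∫ x, (fderiv ℝ ψ x v) • f x ∂m = - ∫ x, ψ x • f' x ∂m) :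
    ∀ᵐ x ∂m, x ∈ U → x + v ∈ U → f (x + v) - f x = ∫ s in Ioc (0 : ℝ) 1, f' (x + s • v) := by
  set O : Set E := U ∩ (fun x => x + v) ⁻¹' U with hO
  have hOo : IsOpen O := hU.inter (hU.preimage (by fun_prop))
  have hk := integrable_translate_prod hm' hf' v
  have hP : Integrable (fun x => ∫ s in Ioc (0 : ℝ) 1, f' (x + s • v)) m := hk.integral_prod_left
  have hfv : Integrable (fun x => f (x + v)) m := hf.comp_add_right v
  have key := hOo.ae_eq_zero_of_integral_contDiff_smul_eq_zero (μ := m)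
    (f := fun x => f (x + v) - f x - ∫ s in Ioc (0 : ℝ) 1, f' (x + s • v))
    (((hfv.sub hf).sub hP).locallyIntegrable.locallyIntegrableOn _) ?_
  · filter_upwards [key] with x hx h1 h2
    exact sub_eq_zero.1 (hx ⟨h1, h2⟩)
  intro ψ hψ hψc hψO
  obtain ⟨Cψ, hCψ⟩ := hψc.exists_bound_of_continuous hψ.continuous
  have hψ1 : ContDiff ℝ 1 ψ := hψ.of_le (by exact_mod_cast le_top)
  have hdc : Continuous (fderiv ℝ ψ) := hψ1.continuous_fderiv one_ne_zero
  have hdv : Continuous fun x => fderiv ℝ ψ x v := hdc.clm_apply continuous_const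
  obtain ⟨Cd, hCd⟩ := (hψc.fderiv_apply (𝕜 := ℝ) v).exists_bound_of_continuous hdv
  have i1 : Integrable (fun x => ψ x • f (x + v)) m :=
    hfv.bdd_smul Cψ hψ.continuous.aestronglyMeasurable (Eventually.of_forall hCψ)
  have i2 : Integrable (fun x => ψ x • f x) m :=
    hf.bdd_smul Cψ hψ.continuous.aestronglyMeasurable (Eventually.of_forall hCψ)
  have i3 : Integrable (fun x => ψ x • ∫ s in Ioc (0 : ℝ) 1, f' (x + s • v)) m :=
    hP.bdd_smul Cψ hψ.continuous.aestronglyMeasurable (Eventually.of_forall hCψ)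
  have e1 : ∫ x, ψ x • f (x + v) ∂m = ∫ x, ψ (x - v) • f x ∂m := by
    rw [← integral_add_right_eq_self (fun x => ψ (x - v) • f x) v]
    simp
  -- the translated test function is admissible
  have hshift : ∀ s ∈ Ioc (0 : ℝ) 1,
      ∫ x, ψ x • f' (x + s • v) ∂m = - ∫ x, (fderiv ℝ ψ (x - s • v) v) • f x ∂m := by
    intro s hs
    have ea : ∫ x, ψ x • f' (x + s • v) ∂m = ∫ x, ψ (x - s • v) • f' x ∂m := by
      rw [← integral_add_right_eq_self (fun x => ψ (x - s • v) • f' x) (s • v)]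
      simp
    have hts : tsupport (fun x => ψ (x - s • v)) = (fun x => x - s • v) ⁻¹' tsupport ψ :=
      tsupport_comp_eq_preimage ψ (Homeomorph.subRight (s • v))
    have hw := h (fun x => ψ (x - s • v)) (hψ.comp (contDiff_id.sub contDiff_const))
      (hψc.comp_homeomorph (Homeomorph.subRight (s • v))) (by
        rw [hts]
        intro x hx
        have hx' := hψO hx
        have := hUc.add_smul_mem hx'.1 hx'.2 (t := s) ⟨hs.1.le, hs.2⟩
        simpa using this)
    rw [ea, ← neg_eq_iff_eq_neg, ← hw]
    simp_rw [fderiv_comp_sub]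
  have e2 : ∫ x, ψ x • (∫ s in Ioc (0 : ℝ) 1, f' (x + s • v)) ∂m
      = ∫ x, (ψ (x - v) - ψ x) • f x ∂m := by
    have ia : Integrable (fun y : E × ℝ => ψ y.1 • f' (y.1 + y.2 • v))
        (m.prod (volume.restrict (Ioc (0 : ℝ) 1))) :=
      hk.bdd_smul Cψ (hψ.continuous.comp continuous_fst).aestronglyMeasurable
        (Eventually.of_forall fun y => hCψ y.1)
    have ib : Integrable (fun y : E × ℝ => (fderiv ℝ ψ (y.1 - y.2 • v) v) • f y.1)
        (m.prod (volume.restrict (Ioc (0 : ℝ) 1))) := by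
      refine Integrable.bdd_smul (hf.comp_fst _) Cd ?_
        (Eventually.of_forall fun y => hCd _)
      exact (hdv.comp
        (by fun_prop : Continuous fun y : E × ℝ => y.1 - y.2 • v)).aestronglyMeasurable
    simp_rw [← integral_smul]
    rw [integral_integral_swap ia, setIntegral_congr_fun measurableSet_Ioc hshift,
      integral_neg, ← integral_integral_swap ib, ← integral_neg]
    refine integral_congr_ae (Eventually.of_forall fun x => ?_)
    simp only
    rw [integral_smul_const, ← neg_smul]
    congr 1
    have hd : ∀ s ∈ uIcc (0 : ℝ) 1,
        HasDerivAt (fun s : ℝ => ψ (x - s • v)) (-(fderiv ℝ ψ (x - s • v) v)) s := by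
      intro s _
      have h1 : HasDerivAt (fun s : ℝ => x - s • v) (-v) s := by
        simpa using ((hasDerivAt_id s).smul_const v).const_sub x
      have h2 := ((hψ1.differentiable one_ne_zero) (x - s • v)).hasFDerivAt.comp_hasDerivAt s h1
      rw [map_neg] at h2
      exact h2
    have hc : Continuous fun s : ℝ => -(fderiv ℝ ψ (x - s • v) v) :=
      (hdv.comp (by fun_prop : Continuous fun s : ℝ => x - s • v)).neg
    have := intervalIntegral.integral_eq_sub_of_hasDerivAt hd (hc.intervalIntegrable _ _)
    rw [intervalIntegral.integral_of_le zero_le_one, integral_neg] at this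
    simpa using this
  simp_rw [smul_sub]
  rw [integral_sub (by exact i1.sub i2) i3, integral_sub i1 i2, e1, e2]
  simp_rw [sub_smul]
  rw [integral_sub _ i2, sub_self]
  have := i1.comp_sub_right v
  simpa using this

end WeakLineDeriv

theorem lintegral_rpow_le_rpow_lintegral {X : Type*} [MeasurableSpace X] (P : Measure X)
    [IsProbabilityMeasure P] {f : X → ℝ≥0∞} (hf : AEMeasurable f P) {r q : ℝ} (hr : 0 < r)
    (hrq : r ≤ q) : ∫⁻ x, f x ^ r ∂P ≤ (∫⁻ x, f x ^ q ∂P) ^ (r / q) := by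
  have h := eLpNorm'_le_eLpNorm'_of_exponent_le (f := f) hr hrq P hf.aestronglyMeasurable
  simp only [eLpNorm', enorm_eq_self] at h
  have h2 := ENNReal.rpow_le_rpow h hr.le
  rw [← ENNReal.rpow_mul, ← ENNReal.rpow_mul, one_div_mul_cancel hr.ne', ENNReal.rpow_one] at h2
  rwa [div_eq_inv_mul, ← one_div]

theorem rpow_lintegral_le_lintegral_rpow {X : Type*} [MeasurableSpace X] (P : Measure X)
    [IsProbabilityMeasure P] {f : X → ℝ≥0∞} (hf : AEMeasurable f P) {q : ℝ}
    (hq : 1 ≤ q) : (∫⁻ x, f x ∂P) ^ q ≤ ∫⁻ x, f x ^ q ∂P := by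
  have h := lintegral_rpow_le_rpow_lintegral P hf one_pos hq
  have h2 := ENNReal.rpow_le_rpow h (z := q) (by linarith)
  rw [← ENNReal.rpow_mul, one_div_mul_cancel (by linarith)] at h2
  simpa using h2

section TranslationEstimate
variable {E W : Type*} [NormedAddCommGroup E] [NormedSpace ℝ E] [FiniteDimensional ℝ E]
  [MeasurableSpace E] [BorelSpace E] [NormedAddCommGroup W] [NormedSpace ℝ W]
  [CompleteSpace W]

theorem lintegral_enorm_sub_translate_rpow_le {m : Measure E} [m.IsAddHaarMeasure] {f f' : E → W}
    {U : Set E} (hU : IsOpen U) (hUc : Convex ℝ U) (hf : Integrable f m)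
    (hm' : StronglyMeasurable f') (hf' : Integrable f' m) (v : E)
    (h : ∀ ψ : E → ℝ, ContDiff ℝ (⊤ : ℕ∞) ψ → HasCompactSupport ψ → tsupport ψ ⊆ U →
      ∫ x, (fderiv ℝ ψ x v) • f x ∂m = - ∫ x, ψ x • f' x ∂m) {r : ℝ} (hr : 1 ≤ r) :
    ∫⁻ x in U ∩ (fun x => x + v) ⁻¹' U, ‖f (x + v) - f x‖ₑ ^ r ∂m ≤ ∫⁻ x in U, ‖f' x‖ₑ ^ r ∂m := by
  have hae := ae_sub_eq_integral_of_weak_lineDeriv hU hUc hf hm' hf' v h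
  have hO : MeasurableSet (U ∩ (fun x => x + v) ⁻¹' U) :=
    (hU.inter (hU.preimage (by fun_prop : Continuous fun x => x + v))).measurableSet
  have : IsProbabilityMeasure (volume.restrict (Ioc (0 : ℝ) 1)) := ⟨by simp⟩
  have hme : Measurable fun x => ‖f' x‖ₑ ^ r := (hm'.enorm).pow_const r
  have hmeas : Measurable (fun y : E × ℝ => ‖f' (y.1 + y.2 • v)‖ₑ ^ r) :=
    hme.comp (by fun_prop : Measurable fun y : E × ℝ => y.1 + y.2 • v)
  calc ∫⁻ x in U ∩ (fun x => x + v) ⁻¹' U, ‖f (x + v) - f x‖ₑ ^ r ∂m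
      ≤ ∫⁻ x in U ∩ (fun x => x + v) ⁻¹' U,
          (∫⁻ s in Ioc (0 : ℝ) 1, ‖f' (x + s • v)‖ₑ ^ r) ∂m := by
        refine setLIntegral_mono_ae' hO ?_
        filter_upwards [hae] with x hx hxO
        rw [hx hxO.1 hxO.2]
        refine (ENNReal.rpow_le_rpow (enorm_integral_le_lintegral_enorm _) (by linarith)).trans ?_
        refine rpow_lintegral_le_lintegral_rpow _ ?_ hr
        exact ((hm'.enorm).comp (by fun_prop : Measurable fun s : ℝ => x + s • v)).aemeasurable
    _ = ∫⁻ s in Ioc (0 : ℝ) 1,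
          (∫⁻ x in U ∩ (fun x => x + v) ⁻¹' U, ‖f' (x + s • v)‖ₑ ^ r ∂m) :=
        lintegral_lintegral_swap hmeas.aemeasurable
    _ ≤ ∫⁻ _s in Ioc (0 : ℝ) 1, (∫⁻ x in U, ‖f' x‖ₑ ^ r ∂m) := by
        refine setLIntegral_mono' measurableSet_Ioc fun s hs => ?_
        rw [← lintegral_indicator hO, ← lintegral_indicator hU.measurableSet,
          ← lintegral_add_right_eq_self (U.indicator fun x => ‖f' x‖ₑ ^ r) (s • v)]
        refine lintegral_mono fun x => ?_
        refine indicator_le (g := fun x => U.indicator (fun x => ‖f' x‖ₑ ^ r) (x + s • v))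
          (fun y hy => ?_) x
        rw [indicator_of_mem]
        exact hUc.add_smul_mem hy.1 hy.2 ⟨hs.1.le, hs.2⟩
    _ = ∫⁻ x in U, ‖f' x‖ₑ ^ r ∂m := by simp

end TranslationEstimate

/-- The product `(∑_j M_{ij} h_j)_i` of a matrix and a vector. -/
def matVec (M : Mat N n) (h : Spc n) : Vec N := WithLp.toLp 2 fun i => ∑ j, M (i, j) * h j

theorem matVec_apply (M : Mat N n) (h : Spc n) (i : Fin N) :
    matVec M h i = ∑ j, M (i, j) * h j := rfl

theorem norm_matVec_le (M : Mat N n) (h : Spc n) : ‖matVec M h‖ ≤ ‖M‖ * ‖h‖ := by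
  refine le_of_sq_le_sq ?_ (by positivity)
  rw [mul_pow, EuclideanSpace.real_norm_sq_eq, EuclideanSpace.real_norm_sq_eq,
    EuclideanSpace.real_norm_sq_eq, Fintype.sum_prod_type, Finset.sum_mul]
  refine Finset.sum_le_sum fun i _ => ?_
  rw [matVec_apply]
  exact Finset.sum_mul_sq_le_sq_mul_sq _ _ _

theorem continuous_matVec : Continuous fun y : Mat N n × Spc n => matVec y.1 y.2 := by
  unfold matVec
  fun_prop

instance isAddHaarMeasure_volume_spaceTime :
    (volume : Measure (Spc n × ℝ)).IsAddHaarMeasure := by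
  rw [Measure.volume_eq_prod]
  infer_instance

theorem fderiv_apply_eq_sum_pderivS {ψ : Spc n × ℝ → ℝ} (hψ : Differentiable ℝ ψ) (z : Spc n × ℝ)
    (h : Spc n) : fderiv ℝ ψ z (h, 0) = ∑ j, h j * pderivS j ψ z := by
  have h1 : ∀ w : Spc n, fderiv ℝ (fun y => ψ (y, z.2)) z.1 w = fderiv ℝ ψ z (w, 0) := by
    intro w
    have hd : HasFDerivAt (fun y : Spc n => (y, z.2)) (ContinuousLinearMap.inl ℝ (Spc n) ℝ) z.1 :=
      hasFDerivAt_prodMk_left z.1 z.2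
    have := (hψ (z.1, z.2)).hasFDerivAt.comp z.1 hd
    rw [show (fun y => ψ (y, z.2)) = ψ ∘ fun y : Spc n => (y, z.2) from rfl, this.fderiv]
    simp
  simp only [pderivS, h1]
  have h2 : h = ∑ j, h j • (EuclideanSpace.single j (1 : ℝ) : Spc n) := by
    have := (EuclideanSpace.basisFun (Fin n) ℝ).sum_repr h
    simpa using this.symm
  have h3 : ((h, (0 : ℝ)) : Spc n × ℝ)
      = ∑ j, h j • ((EuclideanSpace.single j (1 : ℝ) : Spc n), (0 : ℝ)) := by
    ext1
    · rw [Prod.fst_sum]; exact h2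
    · rw [Prod.snd_sum]; simp
  rw [h3, map_sum]
  refine Finset.sum_congr rfl fun j _ => ?_
  rw [map_smul, smul_eq_mul]

theorem integral_vec_apply {X : Type*} [MeasurableSpace X] {m : Measure X} {f : X → Vec N}
    (hf : Integrable f m) (i : Fin N) : (∫ x, f x ∂m) i = ∫ x, f x i ∂m :=
  ((EuclideanSpace.proj (𝕜 := ℝ) i).integral_comp_comm hf).symm

theorem poincare_double_integral {u : Spc n × ℝ → Vec N} {Du : Spc n × ℝ → Mat N n}
    (hu : Measurable u) (hDu : Measurable Du) (x₀ : Spc n) (R : ℝ) {I : Set ℝ} (hI : IsOpen I)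
    (hIc : Convex ℝ I) (iu : IntegrableOn u (Metric.ball x₀ R ×ˢ I))
    (iDu : IntegrableOn Du (Metric.ball x₀ R ×ˢ I))
    (hw : ∀ ψ : Spc n × ℝ → ℝ, ContDiff ℝ (⊤ : ℕ∞) ψ → HasCompactSupport ψ →
      tsupport ψ ⊆ Metric.ball x₀ R ×ˢ I → ∀ (i : Fin N) (j : Fin n),
      ∫ z in Metric.ball x₀ R ×ˢ I, u z i * pderivS j ψ z
        = - ∫ z in Metric.ball x₀ R ×ˢ I, Du z (i, j) * ψ z) {r : ℝ} (hr : 1 ≤ r) :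
    ∫⁻ z in Metric.ball x₀ R ×ˢ I, ∫⁻ y in Metric.ball x₀ R, ‖u (y, z.2) - u z‖ₑ ^ r
      ≤ volume (Metric.ball (0 : Spc n) (2 * R)) *
        (ENNReal.ofReal (2 * R) ^ r * ∫⁻ z in Metric.ball x₀ R ×ˢ I, ‖Du z‖ₑ ^ r) := by
  set B := Metric.ball x₀ R with hB
  set Q := B ×ˢ I with hQ
  have hBo : IsOpen B := Metric.isOpen_ball
  have hQo : IsOpen Q := hBo.prod hI
  have hQm := hQo.measurableSet
  have hQc : Convex ℝ Q := (convex_ball x₀ R).prod hIc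
  have key : ∀ h : Spc n,
      ∫⁻ z in Q ∩ (fun z => z + (h, (0 : ℝ))) ⁻¹' Q, ‖u (z + (h, (0 : ℝ))) - u z‖ₑ ^ r
        ≤ ‖h‖ₑ ^ r * ∫⁻ z in Q, ‖Du z‖ₑ ^ r := by
    intro h
    have hmD : Measurable fun z => matVec (Du z) h :=
      continuous_matVec.measurable.comp (hDu.prodMk measurable_const)
    have hiD : Integrable (Q.indicator fun z => matVec (Du z) h) := by
      rw [integrable_indicator_iff hQm]
      refine (iDu.norm.mul_const ‖h‖).mono' hmD.aestronglyMeasurable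
        (Eventually.of_forall fun z => norm_matVec_le _ _)
    have hiu : Integrable (Q.indicator u) := (integrable_indicator_iff hQm).2 iu
    have := lintegral_enorm_sub_translate_rpow_le (m := volume) hQo hQc (f := Q.indicator u)
      (f' := Q.indicator fun z => matVec (Du z) h) hiu
      (hmD.stronglyMeasurable.indicator hQm) hiD (h, (0 : ℝ)) ?_ hr
    · calc _ = ∫⁻ z in Q ∩ (fun z => z + (h, (0 : ℝ))) ⁻¹' Q,
            ‖Q.indicator u (z + (h, (0 : ℝ))) - Q.indicator u z‖ₑ ^ r := by
            refine setLIntegral_congr_fun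
              (hQm.inter (hQm.preimage (by fun_prop))) fun z hz => ?_
            rw [indicator_of_mem hz.1, indicator_of_mem (by exact hz.2)]
        _ ≤ _ := this
        _ ≤ ∫⁻ z in Q, ‖h‖ₑ ^ r * ‖Du z‖ₑ ^ r := by
            refine setLIntegral_mono' hQm fun z hz => ?_
            rw [indicator_of_mem hz, ← ENNReal.mul_rpow_of_nonneg _ _ (by linarith)]
            refine ENNReal.rpow_le_rpow ?_ (by linarith)
            rw [← ofReal_norm, ← ofReal_norm, ← ofReal_norm,
              ← ENNReal.ofReal_mul (norm_nonneg _), mul_comm ‖h‖]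
            exact ENNReal.ofReal_le_ofReal (norm_matVec_le _ _)
        _ = _ := lintegral_const_mul _ (hDu.enorm.pow_const r)
    · intro ψ hψ hψc hψQ
      have hψ1 : ContDiff ℝ 1 ψ := hψ.of_le (by exact_mod_cast le_top)
      have hdc : Continuous (fderiv ℝ ψ) := hψ1.continuous_fderiv one_ne_zero
      have hdv : ∀ v, Continuous fun x => fderiv ℝ ψ x v := fun v => hdc.clm_apply continuous_const
      have hp : ∀ (j : Fin n) z,
          pderivS j ψ z = fderiv ℝ ψ z (EuclideanSpace.single j (1 : ℝ), 0) := by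
        intro j z
        rw [fderiv_apply_eq_sum_pderivS (hψ1.differentiable one_ne_zero)]
        simp
      have bdd : ∀ v, ∃ C, ∀ x, ‖fderiv ℝ ψ x v‖ ≤ C := fun v =>
        (hψc.fderiv_apply (𝕜 := ℝ) v).exists_bound_of_continuous (hdv v)
      obtain ⟨Cψ, hCψ⟩ := hψc.exists_bound_of_continuous hψ.continuous
      obtain ⟨Cd, hCd⟩ := bdd (h, 0)
      have i1 : Integrable (fun z => fderiv ℝ ψ z (h, 0) • Q.indicator u z) :=
        hiu.bdd_smul Cd (hdv _).aestronglyMeasurable (Eventually.of_forall hCd)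
      have i2 : Integrable (fun z => ψ z • Q.indicator (fun z => matVec (Du z) h) z) :=
        hiD.bdd_smul Cψ hψ.continuous.aestronglyMeasurable (Eventually.of_forall hCψ)
      have iui : ∀ i, Integrable (fun z => u z i) (volume.restrict Q) := fun i =>
        (EuclideanSpace.proj (𝕜 := ℝ) i).integrable_comp iu
      have iDi : ∀ k, Integrable (fun z => Du z k) (volume.restrict Q) := fun k =>
        (EuclideanSpace.proj (𝕜 := ℝ) k).integrable_comp iDu
      ext i
      rw [integral_vec_apply i1, PiLp.neg_apply, integral_vec_apply i2]
      have e1 : ∫ z, (fderiv ℝ ψ z (h, 0) • Q.indicator u z) i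
          = ∫ z in Q, ∑ j, h j * (u z i * pderivS j ψ z) := by
        rw [← integral_indicator hQm]
        refine integral_congr_ae (Eventually.of_forall fun z => ?_)
        by_cases hz : z ∈ Q
        · simp only [indicator_of_mem hz, PiLp.smul_apply, smul_eq_mul]
          rw [fderiv_apply_eq_sum_pderivS (hψ1.differentiable one_ne_zero), Finset.sum_mul]
          exact Finset.sum_congr rfl fun j _ => by ring
        · simp [indicator_of_notMem hz]
      have e2 : ∫ z, (ψ z • Q.indicator (fun z => matVec (Du z) h) z) i
          = ∫ z in Q, ∑ j, h j * (Du z (i, j) * ψ z) := by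
        rw [← integral_indicator hQm]
        refine integral_congr_ae (Eventually.of_forall fun z => ?_)
        by_cases hz : z ∈ Q
        · simp only [indicator_of_mem hz, PiLp.smul_apply, smul_eq_mul, matVec_apply]
          rw [Finset.mul_sum]
          exact Finset.sum_congr rfl fun j _ => by ring
        · simp [indicator_of_notMem hz]
      rw [e1, e2, integral_finsetSum, integral_finsetSum, ← Finset.sum_neg_distrib]
      · refine Finset.sum_congr rfl fun j _ => ?_
        rw [integral_const_mul, integral_const_mul, hw ψ hψ hψc hψQ i j, mul_neg]
      · intro j _
        exact ((iDi (i, j)).mul_bdd hψ.continuous.aestronglyMeasurable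
          (Eventually.of_forall hCψ)).const_mul _
      · intro j _
        obtain ⟨C, hC⟩ := bdd (EuclideanSpace.single j (1 : ℝ), 0)
        simp_rw [hp]
        exact ((iui i).mul_bdd (hdv _).aestronglyMeasurable
          (Eventually.of_forall hC)).const_mul _
  -- the set of admissible pairs, written in terms of the increment `h = y - x`
  have hG : Measurable fun y : (Spc n × ℝ) × Spc n => ‖u (y.1.1 + y.2, y.1.2) - u y.1‖ₑ ^ r := by
    refine Measurable.pow_const (Measurable.enorm (Measurable.sub ?_ ?_)) r
    · exact hu.comp (by fun_prop)
    · exact hu.comp (by fun_prop)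
  have hS : MeasurableSet {y : (Spc n × ℝ) × Spc n | y.1 ∈ Q ∧ y.1.1 + y.2 ∈ B} :=
    (hQm.preimage measurable_fst).inter (hBo.measurableSet.preimage
      (by fun_prop : Measurable fun y : (Spc n × ℝ) × Spc n => y.1.1 + y.2))
  set G : (Spc n × ℝ) × Spc n → ℝ≥0∞ :=
    {y : (Spc n × ℝ) × Spc n | y.1 ∈ Q ∧ y.1.1 + y.2 ∈ B}.indicator
      fun y => ‖u (y.1.1 + y.2, y.1.2) - u y.1‖ₑ ^ r with hGdef
  have hGm : Measurable G := hG.indicator hS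
  calc ∫⁻ z in Q, ∫⁻ y in B, ‖u (y, z.2) - u z‖ₑ ^ r
      = ∫⁻ z, ∫⁻ h, G (z, h) := by
        rw [← lintegral_indicator hQm]
        refine lintegral_congr fun z => ?_
        by_cases hz : z ∈ Q
        · rw [indicator_of_mem hz, ← lintegral_indicator hBo.measurableSet,
            ← lintegral_add_right_eq_self _ z.1]
          refine lintegral_congr fun h => ?_
          rw [add_comm h z.1]
          by_cases hh : z.1 + h ∈ B
          · rw [indicator_of_mem hh, hGdef, indicator_of_mem (by exact ⟨hz, hh⟩)]
          · rw [indicator_of_notMem hh, hGdef, indicator_of_notMem (fun H => hh H.2)]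
        · rw [indicator_of_notMem hz]
          symm
          simp only [hGdef]
          simp [indicator, hz]
    _ = ∫⁻ h, ∫⁻ z, G (z, h) := lintegral_lintegral_swap hGm.aemeasurable
    _ ≤ ∫⁻ h in Metric.ball (0 : Spc n) (2 * R),
          (ENNReal.ofReal (2 * R) ^ r * ∫⁻ z in Q, ‖Du z‖ₑ ^ r) := by
        rw [← lintegral_indicator Metric.isOpen_ball.measurableSet]
        refine lintegral_mono fun h => ?_
        by_cases hh : h ∈ Metric.ball (0 : Spc n) (2 * R)
        · rw [indicator_of_mem hh]
          have hset : MeasurableSet (Q ∩ (fun z => z + (h, (0 : ℝ))) ⁻¹' Q) :=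
            hQm.inter (hQm.preimage (by fun_prop))
          have hle : ‖h‖ₑ ≤ ENNReal.ofReal (2 * R) := by
            rw [← ofReal_norm]
            exact ENNReal.ofReal_le_ofReal (by simpa using (mem_ball_zero_iff.1 hh).le)
          refine le_trans (le_of_eq ?_) ((key h).trans (by gcongr))
          rw [← lintegral_indicator hset]
          refine lintegral_congr fun z => ?_
          by_cases hz : z ∈ Q ∩ (fun z => z + (h, (0 : ℝ))) ⁻¹' Q
          · rw [indicator_of_mem hz, hGdef, indicator_of_mem (by exact ⟨hz.1, hz.2.1⟩)]
            have : z + (h, (0 : ℝ)) = (z.1 + h, z.2) := by ext1 <;> simp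
            rw [this]
          · rw [indicator_of_notMem hz, hGdef, indicator_of_notMem]
            intro H
            refine hz ⟨H.1, H.2, ?_⟩
            simpa using H.1.2
        · rw [indicator_of_notMem hh]
          refine (lintegral_eq_zero_of_ae_eq_zero (Eventually.of_forall fun z => ?_)).le
          refine indicator_of_notMem (fun H => hh ?_) _
          have a1 := mem_ball_iff_norm.1 H.1.1
          have a2 := mem_ball_iff_norm.1 H.2
          rw [mem_ball_zero_iff]
          calc ‖h‖ = ‖(z.1 + h - x₀) - (z.1 - x₀)‖ := by congr 1; abel
            _ ≤ ‖z.1 + h - x₀‖ + ‖z.1 - x₀‖ := norm_sub_le _ _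
            _ < 2 * R := by simp only at a2; linarith
    _ = _ := by rw [setLIntegral_const, mul_comm]

section NormPowers
variable {X V : Type*} [MeasurableSpace X] [NormedAddCommGroup V] {α : Measure X}

theorem integrable_norm_rpow_of_memLp [IsFiniteMeasure α] {w : X → V} {p r : ℝ}
    (hw : MemLp w (ENNReal.ofReal p) α) (hr : 0 < r) (hrp : r ≤ p) :
    Integrable (fun x => ‖w x‖ ^ r) α := by
  have h1 : MemLp w (ENNReal.ofReal r) α := hw.mono_exponent (ENNReal.ofReal_le_ofReal hrp)
  have := h1.integrable_norm_rpow (by simpa using hr) ENNReal.ofReal_ne_top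
  rwa [ENNReal.toReal_ofReal hr.le] at this

theorem lintegral_enorm_rpow_eq_ofReal {w : X → V} {r : ℝ} (hr : 0 ≤ r)
    (hw : Integrable (fun x => ‖w x‖ ^ r) α) :
    ∫⁻ x, ‖w x‖ₑ ^ r ∂α = ENNReal.ofReal (∫ x, ‖w x‖ ^ r ∂α) := by
  rw [ofReal_integral_eq_lintegral_ofReal hw (Eventually.of_forall fun x => by positivity)]
  refine lintegral_congr fun x => ?_
  rw [← ENNReal.ofReal_rpow_of_nonneg (norm_nonneg _) hr, ofReal_norm]

theorem integral_norm_rpow_le_rpow [IsProbabilityMeasure α] {w : X → V} {p k r : ℝ}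
    (hw : MemLp w (ENNReal.ofReal p) α) (hk : 0 < k) (hkr : k ≤ r) (hrp : r ≤ p) :
    ∫ x, ‖w x‖ ^ k ∂α ≤ (∫ x, ‖w x‖ ^ r ∂α) ^ (k / r) := by
  have hr : 0 < r := hk.trans_le hkr
  have h := lintegral_rpow_le_rpow_lintegral α (f := fun x => ‖w x‖ₑ)
    hw.1.enorm hk hkr
  have hnn : 0 ≤ ∫ x, ‖w x‖ ^ r ∂α := integral_nonneg fun x => by positivity
  rw [lintegral_enorm_rpow_eq_ofReal hk.le (integrable_norm_rpow_of_memLp hw hk (hkr.trans hrp)),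
    lintegral_enorm_rpow_eq_ofReal hr.le (integrable_norm_rpow_of_memLp hw hr hrp),
    ENNReal.ofReal_rpow_of_nonneg hnn (by positivity)] at h
  exact (ENNReal.ofReal_le_ofReal_iff (by positivity)).1 h

end NormPowers

/-- The constant in the comparison of a function with its generalized weighted mean. -/
def sliceConst (p Cη : ℝ) : ℝ := (2 ^ (p - 1) + 2) * (Cη * (p * 2 ^ (p - 2)))

theorem one_le_sliceConst {p Cη : ℝ} (hp : 2 ≤ p) (hC : 1 ≤ Cη) : 1 ≤ sliceConst p Cη := by
  have h1 : (1 : ℝ) ≤ 2 ^ (p - 2) := Real.one_le_rpow (by norm_num) (by linarith)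
  have h2 : (0 : ℝ) < 2 ^ (p - 1) := by positivity
  have h3 : 1 ≤ p * 2 ^ (p - 2) := by nlinarith
  have h4 : 1 ≤ Cη * (p * 2 ^ (p - 2)) := by nlinarith
  unfold sliceConst
  nlinarith

theorem enorm_sub_rpow_le_lintegral {X V : Type*} [MeasurableSpace X] [NormedAddCommGroup V]
    [InnerProductSpace ℝ V] [CompleteSpace V] {α : Measure X} [IsProbabilityMeasure α]
    {v : X → V} {p r Cη : ℝ} (hp : 2 ≤ p) (hr : p - 1 ≤ r) (hrp : r ≤ p)
    (hv : MemLp v (ENNReal.ofReal p) α) {η : X → ℝ} (hη : Measurable η) (hη0 : ∀ x, 0 ≤ η x)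
    (hηC : ∀ x, η x ≤ Cη) (hη1 : ∫ x, η x ∂α = 1) (hC : 1 ≤ Cη) {a : V}
    (ha : ‖a‖ ^ (p - 2) • a = ∫ x, η x • (‖v x‖ ^ (p - 2) • v x) ∂α) (m : V) :
    ‖a - m‖ₑ ^ r ≤ ENNReal.ofReal (sliceConst p Cη) ^ p * ∫⁻ x, ‖v x - m‖ₑ ^ r ∂α := by
  have hs : 0 ≤ p - 2 := by linarith
  have hr0 : 0 < r := by linarith
  have hvm : MemLp (fun x => v x - m) (ENNReal.ofReal p) α := hv.sub (memLp_const m)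
  set Z : ℝ := ∫ x, ‖v x - m‖ ^ r ∂α with hZ
  have hZ0 : 0 ≤ Z := integral_nonneg fun x => by positivity
  set Y : ℝ := Z ^ (1 / r) with hY
  have hY0 : 0 ≤ Y := by positivity
  have hC1 := one_le_sliceConst hp hC
  have j1 : ∫ x, ‖v x - m‖ ^ (p - 1) ∂α ≤ Y ^ (p - 1) := by
    have := integral_norm_rpow_le_rpow hvm (by linarith : 0 < p - 1) hr hrp
    rw [hY, ← Real.rpow_mul hZ0]
    convert this using 2
    ring
  have j2 : ∫ x, ‖v x - m‖ ∂α ≤ Y := by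
    have := integral_norm_rpow_le_rpow hvm one_pos (by linarith) hrp
    simpa [hY, hZ] using this
  have iv : Integrable (fun x => ‖v x‖ ^ (p - 2) • v x) α := by
    refine (integrable_norm_rpow_of_memLp hv (r := p - 1) (by linarith) (by linarith)).mono'
      ((hv.1.norm.aemeasurable.pow_const (p - 2)).aestronglyMeasurable.smul hv.1)
      (Eventually.of_forall fun x => ?_)
    rw [norm_smul, Real.norm_of_nonneg (by positivity), ← Real.rpow_add_one' (norm_nonneg _)
      (by linarith)]
    apply le_of_eq; congr 1; ring
  have ηb : ∀ x, ‖η x‖ ≤ Cη := fun x => by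
    rw [Real.norm_of_nonneg (hη0 x)]; exact hηC x
  have iηv : Integrable (fun x => η x • (‖v x‖ ^ (p - 2) • v x)) α :=
    iv.bdd_smul Cη hη.aestronglyMeasurable (Eventually.of_forall ηb)
  have iη : Integrable η α := by
    refine (integrable_const Cη).mono' hη.aestronglyMeasurable (Eventually.of_forall ηb)
  have e : ‖a‖ ^ (p - 2) • a - ‖m‖ ^ (p - 2) • m
      = ∫ x, η x • (‖v x‖ ^ (p - 2) • v x - ‖m‖ ^ (p - 2) • m) ∂α := by
    simp_rw [smul_sub]
    rw [integral_sub iηv (iη.smul_const _), integral_smul_const, hη1, one_smul, ha]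
  have i1 : Integrable (fun x => ‖v x - m‖ ^ (p - 1)) α :=
    integrable_norm_rpow_of_memLp hvm (by linarith) (by linarith)
  have i2 : Integrable (fun x => ‖v x - m‖) α := by
    simpa using integrable_norm_rpow_of_memLp hvm one_pos (by linarith)
  have T : ‖‖a‖ ^ (p - 2) • a - ‖m‖ ^ (p - 2) • m‖
      ≤ Cη * (p * 2 ^ (p - 2)) * (Y ^ (p - 1) + ‖m‖ ^ (p - 2) * Y) := by
    rw [e]
    calc _ ≤ ∫ x, Cη * (p * 2 ^ (p - 2)) *
          (‖v x - m‖ ^ (p - 1) + ‖m‖ ^ (p - 2) * ‖v x - m‖) ∂α := by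
          refine norm_integral_le_of_norm_le ((i1.add (i2.const_mul _)).const_mul _)
            (Eventually.of_forall fun x => ?_)
          have h := norm_rpow_smul_sub_le (v x) m hs
          rw [show p - 2 + 1 = p - 1 by ring, show p - 2 + 2 = p by ring] at h
          rw [norm_smul, mul_assoc]
          exact mul_le_mul (ηb x) h (norm_nonneg _) (by linarith)
      _ = Cη * (p * 2 ^ (p - 2)) *
          (∫ x, ‖v x - m‖ ^ (p - 1) ∂α + ‖m‖ ^ (p - 2) * ∫ x, ‖v x - m‖ ∂α) := by
          rw [integral_const_mul, integral_add i1 (i2.const_mul _), integral_const_mul]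
      _ ≤ _ := by gcongr
  have XY : ‖a - m‖ ≤ sliceConst p Cη * Y := by
    refine le_mul_of_rpow_add_le (m := ‖m‖) hY0 (norm_nonneg _) hs hC1 ?_
    have h1 := norm_sub_rpow_le a m hs
    have h2 := rpow_add_rpow_mul_norm_sub_le a m hs
    rw [show p - 2 + 1 = p - 1 by ring] at *
    have h3 : 0 ≤ ‖a‖ ^ (p - 2) * ‖a - m‖ := by positivity
    calc ‖a - m‖ ^ (p - 1) + ‖m‖ ^ (p - 2) * ‖a - m‖
        ≤ (2 ^ (p - 1) + 2) * ‖‖a‖ ^ (p - 2) • a - ‖m‖ ^ (p - 2) • m‖ := by nlinarith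
      _ ≤ (2 ^ (p - 1) + 2) *
          (Cη * (p * 2 ^ (p - 2)) * (Y ^ (p - 1) + ‖m‖ ^ (p - 2) * Y)) := by gcongr
      _ = _ := by unfold sliceConst; ring
  have hfin : ‖a - m‖ ^ r ≤ sliceConst p Cη ^ p * Z := by
    calc ‖a - m‖ ^ r ≤ (sliceConst p Cη * Y) ^ r := Real.rpow_le_rpow (norm_nonneg _) XY hr0.le
      _ = sliceConst p Cη ^ r * Z := by
        rw [Real.mul_rpow (by linarith) hY0, hY, ← Real.rpow_mul hZ0, one_div_mul_cancel hr0.ne',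
          Real.rpow_one]
      _ ≤ _ := by
        gcongr
  rw [lintegral_enorm_rpow_eq_ofReal hr0.le (integrable_norm_rpow_of_memLp hvm hr0 hrp),
    ← ofReal_norm, ENNReal.ofReal_rpow_of_nonneg (norm_nonneg _) hr0.le,
    ENNReal.ofReal_rpow_of_nonneg (by linarith) (by linarith),
    ← ENNReal.ofReal_mul (by positivity)]
  exact ENNReal.ofReal_le_ofReal hfin

/-- If the differences of the powers of `a` are controlled by `D`, then `a` stays close to one of
its values. -/
theorem exists_forall_ae_norm_sub_rpow_le {Y V : Type*} [MeasurableSpace Y] [NormedAddCommGroup V]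
    [InnerProductSpace ℝ V] {β : Measure Y} [NeZero β] {a : Y → V} {s D : ℝ} (hs : 0 ≤ s)
    (h : ∀ᵐ t' ∂β, ∀ᵐ t ∂β, ‖‖a t‖ ^ s • a t - ‖a t'‖ ^ s • a t'‖ ≤ D) :
    ∃ b : V, ∀ᵐ t ∂β, ‖a t - b‖ ^ (s + 1) ≤ 2 ^ (s + 1) * D := by
  obtain ⟨t', ht'⟩ := h.exists
  refine ⟨a t', ?_⟩
  filter_upwards [ht'] with t ht
  exact (norm_sub_rpow_le _ _ hs).trans (by gcongr)

theorem exists_forall_ae_rpow_mul_norm_sub_le {Y V : Type*} [MeasurableSpace Y]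
    [NormedAddCommGroup V] [InnerProductSpace ℝ V] {β : Measure Y} {a : Y → V} {s D κ : ℝ}
    (hs : 0 ≤ s) (hκ : 0 ≤ κ) (h : ∀ᵐ t' ∂β, ∀ᵐ t ∂β, ‖‖a t‖ ^ s • a t - ‖a t'‖ ^ s • a t'‖ ≤ D)
    (hne : ¬ ∀ᵐ t ∂β, ‖a t‖ ≤ κ) :
    ∃ b : V, ∀ᵐ t ∂β, κ ^ s * ‖a t - b‖ ≤ 2 * D := by
  have hf : ∃ᶠ t in ae β, ¬ ‖a t‖ ≤ κ := not_eventually.1 hne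
  obtain ⟨t', h1, h2⟩ := (hf.and_eventually h).exists
  refine ⟨a t', ?_⟩
  filter_upwards [h2] with t ht
  have h3 := rpow_add_rpow_mul_norm_sub_le (a t) (a t') hs
  have h4 : κ ^ s ≤ ‖a t‖ ^ s + ‖a t'‖ ^ s := by
    have := Real.rpow_le_rpow hκ (not_le.1 h1).le hs
    have h5 : 0 ≤ ‖a t‖ ^ s := by positivity
    linarith
  calc κ ^ s * ‖a t - a t'‖ ≤ (‖a t‖ ^ s + ‖a t'‖ ^ s) * ‖a t - a t'‖ := by gcongr
    _ ≤ _ := h3.trans (by gcongr)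

theorem le_radius_mul_of_scale_le {p μ ρ R G D X C₀ C₃ : ℝ} (hp : 2 ≤ p) (hμ : 0 < μ) (hρ : 0 < ρ)
    (hR : R = μ ^ ((2 - p) / p) * ρ) (hG : 0 ≤ G) (hC₀ : 1 ≤ C₀) (hC₃ : 1 ≤ C₃)
    (hμC : μ ^ p ≤ C₀) (hD : D ≤ C₃ * (ρ ^ p / R) * G ^ (p - 1))
    (hX : 0 ≤ X) (h : X ^ (p - 1) ≤ 2 ^ (p - 1) * D) : X ≤ 2 * C₃ * C₀ * (R * G) := by
  have hR0 : 0 < R := by rw [hR]; positivity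
  have hp1 : 0 < p - 1 := by linarith
  have h1 : ρ ^ p ≤ C₀ * R ^ p := by
    have e : ρ ^ p = μ ^ (p - 2) * R ^ p := by
      rw [hR, Real.mul_rpow (by positivity) hρ.le, ← Real.rpow_mul hμ.le, ← mul_assoc,
        ← Real.rpow_add hμ]
      have : p - 2 + (2 - p) / p * p = 0 := by field_simp; ring
      rw [this]; simp
    rw [e]
    gcongr
    calc μ ^ (p - 2) = (μ ^ p) ^ ((p - 2) / p) := by
          rw [← Real.rpow_mul hμ.le]; congr 1; field_simp
      _ ≤ C₀ ^ ((p - 2) / p) :=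
          Real.rpow_le_rpow (by positivity) hμC (div_nonneg (by linarith) (by linarith))
      _ ≤ C₀ ^ (1 : ℝ) := by
          refine Real.rpow_le_rpow_of_exponent_le hC₀ ?_
          rw [div_le_one (by linarith)]; linarith
      _ = C₀ := Real.rpow_one _
  have h2 : ρ ^ p / R ≤ C₀ * R ^ (p - 1) := by
    rw [div_le_iff₀ hR0, mul_assoc, ← Real.rpow_add_one hR0.ne']
    simpa using h1
  have hone : ∀ c : ℝ, 1 ≤ c → c ≤ c ^ (p - 1) := fun c hc => by
    simpa using Real.rpow_le_rpow_of_exponent_le hc (by linarith : (1 : ℝ) ≤ p - 1)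
  have h3 : X ^ (p - 1) ≤ (2 * C₃ * C₀ * (R * G)) ^ (p - 1) := by
    calc X ^ (p - 1) ≤ 2 ^ (p - 1) * (C₃ * (C₀ * R ^ (p - 1)) * G ^ (p - 1)) := by
          refine h.trans ?_
          gcongr
          exact hD.trans (by gcongr)
      _ ≤ 2 ^ (p - 1) * (C₃ ^ (p - 1) * (C₀ ^ (p - 1) * R ^ (p - 1)) * G ^ (p - 1)) := by
          gcongr
          · exact hone _ hC₃
          · exact hone _ hC₀
      _ = _ := by
          rw [Real.mul_rpow (by positivity) (by positivity),
            Real.mul_rpow (by positivity) (by positivity),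
            Real.mul_rpow (by positivity) (by positivity), Real.mul_rpow hR0.le hG]
          ring
  exact (Real.rpow_le_rpow_iff hX (by positivity) hp1).1 h3

theorem le_radius_mul_of_intrinsic {p μ ρ R G D X J U κ K C₃ : ℝ} (hp : 2 ≤ p) (hμ : 0 < μ)
    (hρ : 0 < ρ) (hR : R = μ ^ ((2 - p) / p) * ρ) (hG : 0 ≤ G) (hK : 1 ≤ K) (hC₃ : 1 ≤ C₃)
    (hκ : 0 < κ) (hκU : κ ^ p = U / 2 ^ (p + 2)) (hGJ : G ^ p ≤ 2 ^ p * J)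
    (hsup : μ ^ (2 : ℝ) * ρ ^ p * J ≤ K * U)
    (hD : D ≤ C₃ * (ρ ^ p / R) * G ^ (p - 1)) (h : κ ^ (p - 2) * X ≤ 2 * D) :
    X ≤ 2 * C₃ * (K * 2 ^ (2 * p + 2)) * (R * G) := by
  have hR0 : 0 < R := by rw [hR]; positivity
  have hκs : 0 < κ ^ (p - 2) := by positivity
  rcases hG.eq_or_lt with h0 | hGpos
  · rw [← h0, Real.zero_rpow (by linarith), mul_zero] at hD
    rw [← h0, mul_zero, mul_zero]
    by_contra! hX
    have : 0 < κ ^ (p - 2) * X := by positivity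
    linarith
  set M : ℝ := K * 2 ^ (2 * p + 2) with hM
  have hM1 : 1 ≤ M := by
    have : (1 : ℝ) ≤ 2 ^ (2 * p + 2) := Real.one_le_rpow (by norm_num) (by linarith)
    nlinarith
  set w : ℝ := μ ^ (2 / p) * ρ * G with hw
  have hw0 : 0 < w := by positivity
  have hwp : w ^ p ≤ M * κ ^ p := by
    rw [hw, Real.mul_rpow (by positivity) hG, Real.mul_rpow (by positivity) hρ.le,
      ← Real.rpow_mul hμ.le, div_mul_cancel₀ _ (by linarith : p ≠ 0), hκU]
    have e2 : (2 : ℝ) ^ (2 * p + 2) = 2 ^ p * 2 ^ (p + 2) := by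
      rw [← Real.rpow_add (by norm_num)]; congr 1; ring
    calc μ ^ (2 : ℝ) * ρ ^ p * G ^ p ≤ μ ^ (2 : ℝ) * ρ ^ p * (2 ^ p * J) := by gcongr
      _ = 2 ^ p * (μ ^ (2 : ℝ) * ρ ^ p * J) := by ring
      _ ≤ 2 ^ p * (K * U) := by gcongr
      _ = _ := by rw [hM, e2]; field_simp
  have hws : w ^ (p - 2) ≤ M * κ ^ (p - 2) := by
    have hθ : 0 ≤ (p - 2) / p := div_nonneg (by linarith) (by linarith)
    have h1 := Real.rpow_le_rpow (by positivity) hwp hθ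
    rw [Real.mul_rpow (x := M) (by linarith) (by positivity), ← Real.rpow_mul hw0.le,
      ← Real.rpow_mul hκ.le, mul_div_cancel₀ _ (by linarith : p ≠ 0)] at h1
    refine h1.trans ?_
    gcongr
    calc M ^ ((p - 2) / p) ≤ M ^ (1 : ℝ) := by
          refine Real.rpow_le_rpow_of_exponent_le hM1 ?_
          rw [div_le_one (by linarith)]; linarith
      _ = M := Real.rpow_one _
  have e : ρ ^ p / R * G ^ (p - 1) = w ^ (p - 2) * (R * G) := by
    rw [div_mul_eq_mul_div, div_eq_iff hR0.ne']
    have eR : R * R = μ ^ (-(2 * (p - 2) / p)) * (ρ * ρ) := by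
      have : -(2 * (p - 2) / p) = (2 - p) / p + (2 - p) / p := by ring
      rw [this, Real.rpow_add hμ, hR]; ring
    have ew : w ^ (p - 2) = μ ^ (2 * (p - 2) / p) * ρ ^ (p - 2) * G ^ (p - 2) := by
      rw [hw, Real.mul_rpow (by positivity) hG, Real.mul_rpow (by positivity) hρ.le,
        ← Real.rpow_mul hμ.le]
      congr 3; ring
    have eρ : ρ ^ p = ρ ^ (p - 2) * (ρ * ρ) := by
      rw [← mul_assoc, ← Real.rpow_add_one hρ.ne', ← Real.rpow_add_one hρ.ne']
      congr 1; ring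
    have eG : G ^ (p - 1) = G ^ (p - 2) * G := by
      rw [← Real.rpow_add_one hGpos.ne']; congr 1; ring
    have eμ : μ ^ (2 * (p - 2) / p) * μ ^ (-(2 * (p - 2) / p)) = 1 := by
      rw [← Real.rpow_add hμ]; simp
    calc ρ ^ p * G ^ (p - 1) = ρ ^ (p - 2) * (ρ * ρ) * (G ^ (p - 2) * G) * 1 := by
          rw [eρ, eG, mul_one]
      _ = w ^ (p - 2) * G * (R * R) := by rw [← eμ, ew, eR]; ring
      _ = _ := by ring
  rcases le_or_gt X 0 with hX | hX
  · exact hX.trans (by positivity)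
  have hfin : w ^ (p - 2) * X ≤ w ^ (p - 2) * (2 * C₃ * M * (R * G)) := by
    calc w ^ (p - 2) * X ≤ M * κ ^ (p - 2) * X := by gcongr
      _ = M * (κ ^ (p - 2) * X) := by ring
      _ ≤ M * (2 * (C₃ * (ρ ^ p / R) * G ^ (p - 1))) := by
          refine mul_le_mul_of_nonneg_left (h.trans ?_) (by positivity)
          linarith
      _ = 2 * C₃ * M * (ρ ^ p / R * G ^ (p - 1)) := by ring
      _ = _ := by rw [e]; ring
  exact le_of_mul_le_mul_left hfin (by positivity)

theorem enorm_add_rpow_le {V : Type*} [NormedAddCommGroup V] (a b : V) {r p : ℝ} (hr : 1 ≤ r)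
    (hrp : r ≤ p) : ‖a + b‖ₑ ^ r ≤ 2 ^ p * (‖a‖ₑ ^ r + ‖b‖ₑ ^ r) := by
  refine (ENNReal.rpow_le_rpow (enorm_add_le a b) (by linarith)).trans ?_
  refine (ENNReal.rpow_add_le_mul_rpow_add_rpow _ _ hr).trans ?_
  gcongr
  · norm_num
  · linarith

theorem memLp_slice {X Y V : Type*} [MeasurableSpace X] [MeasurableSpace Y] [NormedAddCommGroup V]
    {α : Measure X} {β : Measure Y} [IsFiniteMeasure α] [IsFiniteMeasure β] {u : X × Y → V}
    (hm : StronglyMeasurable u)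
    {p : ℝ} (hp : 0 < p) (hu : MemLp u (ENNReal.ofReal p) (α.prod β)) :
    ∀ᵐ t ∂β, MemLp (fun x => u (x, t)) (ENNReal.ofReal p) α := by
  filter_upwards [(integrable_norm_rpow_of_memLp hu hp le_rfl).prod_left_ae] with t ht
  have hmt : StronglyMeasurable fun x => u (x, t) :=
    hm.comp_measurable (measurable_id.prodMk measurable_const)
  rw [← integrable_norm_rpow_iff hmt.aestronglyMeasurable (by simpa using hp)
    ENNReal.ofReal_ne_top, ENNReal.toReal_ofReal hp.le]
  exact ht

theorem lintegral_enorm_sub_rpow_le {X Y : Type*} [MeasurableSpace X] [MeasurableSpace Y]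
    {α : Measure X} {β : Measure Y} [IsProbabilityMeasure α] [IsProbabilityMeasure β]
    {u : X × Y → Vec N} {p r Cη : ℝ} (hp : 2 ≤ p) (hr : p - 1 ≤ r) (hrp : r ≤ p)
    (hm : Measurable u) (hu : MemLp u (ENNReal.ofReal p) (α.prod β))
    {η : X → ℝ} (hη : Measurable η) (hη0 : ∀ x, 0 ≤ η x)
    (hηC : ∀ x, η x ≤ Cη) (hη1 : ∫ x, η x ∂α = 1) (hC : 1 ≤ Cη) {a : Y → Vec N}
    (ha : ∀ t, ‖a t‖ ^ (p - 2) • a t = ∫ x, η x • (‖u (x, t)‖ ^ (p - 2) • u (x, t)) ∂α)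
    {E : ℝ≥0∞} (hE : ∫⁻ z, ∫⁻ y, ‖u (y, z.2) - u z‖ₑ ^ r ∂α ∂(α.prod β) ≤ E)
    {b : Vec N} {B : ℝ} (hB : ∀ᵐ t ∂β, ‖a t - b‖ ≤ B) :
    ∫⁻ z, ‖u z - b‖ₑ ^ r ∂(α.prod β) ≤
      2 ^ p * (ENNReal.ofReal (sliceConst p Cη) ^ p * E + ENNReal.ofReal B ^ r) := by
  have hmeas : Measurable fun z : X × Y => ∫⁻ y, ‖u (y, z.2) - u z‖ₑ ^ r ∂α := by
    refine Measurable.lintegral_prod_right' (f := fun w : (X × Y) × X =>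
      ‖u (w.2, w.1.2) - u w.1‖ₑ ^ r) ?_
    fun_prop
  rw [lintegral_prod_symm _ hmeas.aemeasurable] at hE
  rw [lintegral_prod_symm _ (by fun_prop)]
  have key : ∀ᵐ t ∂β, ∫⁻ x, ‖u (x, t) - b‖ₑ ^ r ∂α ≤
      2 ^ p * (ENNReal.ofReal (sliceConst p Cη) ^ p *
        (∫⁻ x, ∫⁻ y, ‖u (y, t) - u (x, t)‖ₑ ^ r ∂α ∂α) + ENNReal.ofReal B ^ r) := by
    filter_upwards [hB, memLp_slice hm.stronglyMeasurable (by linarith) hu] with t ht hut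
    have hmt : Measurable fun x => ∫⁻ y, ‖u (y, t) - u (x, t)‖ₑ ^ r ∂α := by
      refine Measurable.lintegral_prod_right' (f := fun w : X × X =>
        ‖u (w.2, t) - u (w.1, t)‖ₑ ^ r) ?_
      fun_prop
    calc ∫⁻ x, ‖u (x, t) - b‖ₑ ^ r ∂α
        ≤ ∫⁻ x, 2 ^ p * (ENNReal.ofReal (sliceConst p Cη) ^ p *
            ∫⁻ y, ‖u (y, t) - u (x, t)‖ₑ ^ r ∂α + ENNReal.ofReal B ^ r) ∂α := by
          refine lintegral_mono fun x => ?_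
          have e : u (x, t) - b = (u (x, t) - a t) + (a t - b) := by abel
          rw [e]
          refine (enorm_add_rpow_le _ _ (by linarith) hrp).trans ?_
          gcongr
          · rw [enorm_sub_rev]
            exact enorm_sub_rpow_le_lintegral hp hr hrp hut hη hη0 hηC hη1 hC (ha t) _
          · linarith
          · rw [← ofReal_norm]
            exact ENNReal.ofReal_le_ofReal ht
      _ = _ := by
          rw [lintegral_const_mul _ (by fun_prop), lintegral_add_right _ measurable_const,
            lintegral_const_mul _ hmt]
          simp
  refine (lintegral_mono_ae key).trans ?_
  have hmeas' : Measurable fun t => ∫⁻ x, ∫⁻ y, ‖u (y, t) - u (x, t)‖ₑ ^ r ∂α ∂α :=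
    Measurable.lintegral_prod_left' hmeas
  rw [lintegral_const_mul _ (by fun_prop), lintegral_add_right _ measurable_const,
    lintegral_const_mul _ hmeas']
  simp only [lintegral_const, measure_univ, mul_one]
  gcongr

theorem exists_lintegral_enorm_sub_rpow_le {p K Cη C₁ C₃ : ℝ} (hp : 2 ≤ p) (hK : 1 ≤ K)
    (hCη : 1 ≤ Cη) (hC₁ : 1 ≤ C₁) (hC₃ : 1 ≤ C₃) :
    ∃ C : ℝ, 0 < C ∧ ∀ (n N : ℕ) (α : Measure (Spc n)) (β : Measure ℝ),
      IsProbabilityMeasure α → IsProbabilityMeasure β →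
      ∀ (u : Spc n × ℝ → Vec N) (η : Spc n → ℝ) (q μ ρ R Jq Jp : ℝ),
      Measurable u → MemLp u (ENNReal.ofReal p) (α.prod β) →
      Measurable η → (∀ x, 0 ≤ η x) → (∀ x, η x ≤ Cη) → ∫ x, η x ∂α = 1 →
      p - 1 ≤ q → q ≤ p → 0 < μ → 0 < ρ → R = μ ^ ((2 - p) / p) * ρ → 0 ≤ Jq → 0 ≤ Jp →
      ∫⁻ z, ∫⁻ y, ‖u (y, z.2) - u z‖ₑ ^ q ∂α ∂(α.prod β) ≤ ENNReal.ofReal (C₁ * (R ^ q * Jq)) →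
      ∫⁻ z, ∫⁻ y, ‖u (y, z.2) - u z‖ₑ ^ p ∂α ∂(α.prod β) ≤ ENNReal.ofReal (C₁ * (R ^ p * Jp)) →
      Jq ^ (p / q) ≤ 2 ^ p * Jp →
      (μ ^ (2 : ℝ) * ρ ^ p * Jp ≤ K * ∫ z, ‖u z‖ ^ p ∂(α.prod β) ∨ μ ^ p ≤ K) →
      (∀ᵐ t' ∂β, ∀ᵐ t ∂β, ‖(∫ x, η x • (‖u (x, t)‖ ^ (p - 2) • u (x, t)) ∂α)
        - ∫ x, η x • (‖u (x, t')‖ ^ (p - 2) • u (x, t')) ∂α‖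
          ≤ C₃ * (ρ ^ p / R) * Jq ^ ((p - 1) / q)) →
      ∃ b, ∫⁻ z, ‖u z - b‖ₑ ^ q ∂(α.prod β) ≤ ENNReal.ofReal (C * (R ^ q * Jq)) := by
  set S : ℝ := sliceConst p Cη ^ p with hS
  have hS1 : 1 ≤ S := Real.one_le_rpow (one_le_sliceConst hp hCη) (by linarith)
  have h2p : (1 : ℝ) ≤ 2 ^ p := Real.one_le_rpow (by norm_num) (by linarith)
  set C₀ : ℝ := 4 * 2 ^ p * S * C₁ * K with hC₀
  have hC₀K : K ≤ C₀ := by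
    have h1 : 1 ≤ 4 * (2 : ℝ) ^ p := by linarith
    have h2 : 1 ≤ 4 * 2 ^ p * S := one_le_mul_of_one_le_of_one_le h1 hS1
    have h3 : 1 ≤ 4 * 2 ^ p * S * C₁ := one_le_mul_of_one_le_of_one_le h2 hC₁
    exact le_mul_of_one_le_left (by linarith) h3
  set Cb : ℝ := 2 * C₃ * (C₀ + K * 2 ^ (2 * p + 2)) with hCb
  have h2pp : (1 : ℝ) ≤ 2 ^ (2 * p + 2) := Real.one_le_rpow (by norm_num) (by linarith)
  have hCb1 : 1 ≤ Cb := by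
    refine one_le_mul_of_one_le_of_one_le (by linarith) ?_
    have : 0 ≤ K * (2 : ℝ) ^ (2 * p + 2) := by positivity
    linarith
  refine ⟨2 ^ p * (S * C₁ + Cb ^ p), by positivity, ?_⟩
  intro n N α β _ _ u η q μ ρ R Jq Jp hm hu hη hη0 hηC hη1 hq hqp hμ hρ hR hJq hJp hPq hPp hJJ
    hsup hglue
  have hq0 : 0 < q := by linarith
  have hR0 : 0 < R := by rw [hR]; positivity
  choose a ha using fun t => exists_rpow_smul_eq
    (∫ x, η x • (‖u (x, t)‖ ^ (p - 2) • u (x, t)) ∂α) (by linarith : 0 ≤ p - 2)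
  set D : ℝ := C₃ * (ρ ^ p / R) * Jq ^ ((p - 1) / q) with hD
  have hglue' : ∀ᵐ t' ∂β, ∀ᵐ t ∂β,
      ‖‖a t‖ ^ (p - 2) • a t - ‖a t'‖ ^ (p - 2) • a t'‖ ≤ D := by
    simpa only [ha] using hglue
  set G : ℝ := Jq ^ (1 / q) with hGdef
  have hG : 0 ≤ G := by positivity
  have hGp : ∀ k : ℝ, G ^ k = Jq ^ (k / q) := fun k => by
    rw [hGdef, ← Real.rpow_mul hJq]; congr 1; ring
  have hDG : D ≤ C₃ * (ρ ^ p / R) * G ^ (p - 1) := by rw [hGp]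
  have hGJ : G ^ p ≤ 2 ^ p * Jp := by rw [hGp]; exact hJJ
  have hSc : ENNReal.ofReal (sliceConst p Cη) ^ p = ENNReal.ofReal S := by
    rw [hS, ENNReal.ofReal_rpow_of_nonneg (zero_le_one.trans (one_le_sliceConst hp hCη))
      (by linarith)]
  have h2e : (2 : ℝ≥0∞) ^ p = ENNReal.ofReal (2 ^ p) := by
    rw [← ENNReal.ofReal_rpow_of_nonneg (by norm_num) (by linarith)]; simp
  -- a bound for the distance of the slice values to one fixed vector suffices
  have finish : ∀ b : Vec N, (∀ᵐ t ∂β, ‖a t - b‖ ≤ Cb * (R * G)) →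
      ∫⁻ z, ‖u z - b‖ₑ ^ q ∂(α.prod β) ≤
        ENNReal.ofReal (2 ^ p * (S * C₁ + Cb ^ p) * (R ^ q * Jq)) := by
    intro b hb
    refine (lintegral_enorm_sub_rpow_le hp hq hqp hm hu hη hη0 hηC hη1 hCη ha hPq hb).trans ?_
    rw [hSc, h2e, ENNReal.ofReal_rpow_of_nonneg (by positivity) hq0.le,
      ← ENNReal.ofReal_mul (by positivity), ← ENNReal.ofReal_add (by positivity) (by positivity),
      ← ENNReal.ofReal_mul (by positivity)]
    refine ENNReal.ofReal_le_ofReal ?_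
    rw [Real.mul_rpow (by positivity) (by positivity), Real.mul_rpow hR0.le hG, hGp,
      div_self hq0.ne', Real.rpow_one]
    have : Cb ^ q ≤ Cb ^ p := Real.rpow_le_rpow_of_exponent_le hCb1 hqp
    calc 2 ^ p * (S * (C₁ * (R ^ q * Jq)) + Cb ^ q * (R ^ q * Jq))
        ≤ 2 ^ p * (S * (C₁ * (R ^ q * Jq)) + Cb ^ p * (R ^ q * Jq)) := by gcongr
      _ = _ := by ring
  by_cases hμC : μ ^ p ≤ C₀
  · obtain ⟨b, hb⟩ := exists_forall_ae_norm_sub_rpow_le (by linarith) hglue'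
    refine ⟨b, finish b ?_⟩
    filter_upwards [hb] with t ht
    rw [show p - 2 + 1 = p - 1 by ring] at ht
    refine (le_radius_mul_of_scale_le hp hμ hρ hR hG (hK.trans hC₀K) hC₃ hμC hDG
      (norm_nonneg _) ht).trans ?_
    rw [hCb]
    gcongr
    have : 0 ≤ K * (2 : ℝ) ^ (2 * p + 2) := by positivity
    linarith
  push Not at hμC
  have hsup1 := hsup.resolve_right (not_le.2 (hC₀K.trans_lt hμC))
  set U : ℝ := ∫ z, ‖u z‖ ^ p ∂(α.prod β) with hU
  have hU0 : 0 ≤ U := integral_nonneg fun z => by positivity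
  have hUl : ∫⁻ z, ‖u z‖ₑ ^ p ∂(α.prod β) = ENNReal.ofReal U :=
    lintegral_enorm_rpow_eq_ofReal (by linarith)
      (integrable_norm_rpow_of_memLp hu (by linarith) le_rfl)
  rcases hU0.eq_or_lt with hU0 | hUpos
  · refine ⟨0, ?_⟩
    have h := lintegral_rpow_le_rpow_lintegral (α.prod β) (f := fun z => ‖u z‖ₑ)
      (by fun_prop) hq0 hqp
    rw [hUl, ← hU0, ENNReal.ofReal_zero, ENNReal.zero_rpow_of_pos (by positivity)] at h
    simpa only [sub_zero] using h.trans zero_le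
  set κ : ℝ := (U / 2 ^ (p + 2)) ^ (1 / p) with hκdef
  have hκ : 0 < κ := by positivity
  have hκU : κ ^ p = U / 2 ^ (p + 2) := by
    rw [hκdef, ← Real.rpow_mul (by positivity), one_div_mul_cancel (by linarith), Real.rpow_one]
  have hne : ¬ ∀ᵐ t ∂β, ‖a t‖ ≤ κ := by
    intro hall
    have h := lintegral_enorm_sub_rpow_le (b := 0) hp (by linarith) le_rfl hm hu hη hη0 hηC hη1 hCη
      ha hPp (by simpa only [sub_zero] using hall)
    simp only [sub_zero] at h
    rw [hUl, hSc, h2e, ENNReal.ofReal_rpow_of_nonneg hκ.le (by linarith),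
      ← ENNReal.ofReal_mul (by positivity), ← ENNReal.ofReal_add (by positivity) (by positivity),
      ← ENNReal.ofReal_mul (by positivity), ENNReal.ofReal_le_ofReal_iff (by positivity), hκU,
      Real.rpow_add (by norm_num), mul_add] at h
    have e1 : (2 : ℝ) ^ p * (U / (2 ^ p * 2 ^ (2 : ℝ))) = U / 4 := by
      rw [show (2 : ℝ) ^ (2 : ℝ) = 4 by norm_num]
      field_simp
    have e2 : μ ^ p * R ^ p = μ ^ (2 : ℝ) * ρ ^ p := by
      rw [hR, Real.mul_rpow (by positivity) hρ.le, ← Real.rpow_mul hμ.le, ← mul_assoc,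
        ← Real.rpow_add hμ, div_mul_cancel₀ _ (by linarith : p ≠ 0)]
      congr 2; ring
    rw [e1] at h
    have h3 : C₀ * (R ^ p * Jp) ≤ K * U := by
      calc C₀ * (R ^ p * Jp) ≤ μ ^ p * (R ^ p * Jp) := by gcongr
        _ = μ ^ (2 : ℝ) * ρ ^ p * Jp := by rw [← mul_assoc, e2]
        _ ≤ _ := hsup1
    have h4 : 4 * (2 ^ p * (S * (C₁ * (R ^ p * Jp)))) ≤ U := by
      refine le_of_mul_le_mul_left ?_ (by linarith : 0 < K)
      calc K * (4 * (2 ^ p * (S * (C₁ * (R ^ p * Jp))))) = C₀ * (R ^ p * Jp) := by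
            rw [hC₀]; ring
        _ ≤ _ := h3
    linarith
  obtain ⟨b, hb⟩ := exists_forall_ae_rpow_mul_norm_sub_le (by linarith) hκ.le hglue' hne
  refine ⟨b, finish b ?_⟩
  filter_upwards [hb] with t ht
  refine (le_radius_mul_of_intrinsic hp hμ hρ hR hG hK hC₃ hκ hκU hGJ hsup1 hDG ht).trans ?_
  rw [hCb]
  gcongr
  linarith

theorem exists_normalized_cutoff (n : ℕ) :
    ∃ Cη Cg : ℝ, 1 ≤ Cη ∧ 1 ≤ Cg ∧ ∀ (x₀ : Spc n) (R : ℝ), 0 < R → ∃ η : Spc n → ℝ,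
      ContDiff ℝ (⊤ : ℕ∞) η ∧ HasCompactSupport η ∧ tsupport η ⊆ Metric.ball x₀ R ∧
      (∀ x, 0 ≤ η x) ∧ (∀ x, η x ≤ Cη) ∧ ⨍ x in Metric.ball x₀ R, η x = 1 ∧
      ∀ x, ‖gradient η x‖ ≤ Cg / R := by
  let ζ : ContDiffBump (0 : Spc n) := ⟨1 / 4, 1 / 2, by norm_num, by norm_num⟩
  have hζ : ContDiff ℝ (⊤ : ℕ∞) ζ := ζ.contDiff
  have hI : 0 < ∫ x, ζ x := ζ.integral_pos
  obtain ⟨M, hM⟩ := (ζ.hasCompactSupport.fderiv (𝕜 := ℝ)).exists_bound_of_continuous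
    (hζ.continuous_fderiv (by simp))
  have hV : 0 < volume.real (Metric.ball (0 : Spc n) 1) :=
    ENNReal.toReal_pos (Metric.measure_ball_pos _ _ one_pos).ne' measure_ball_lt_top.ne
  set c : ℝ := volume.real (Metric.ball (0 : Spc n) 1) / ∫ x, ζ x with hc
  have hc0 : 0 < c := by positivity
  refine ⟨max c 1, max (c * M) 1, le_max_right _ _, le_max_right _ _, fun x₀ R hR => ?_⟩
  have hsupp : Function.support (fun x => c * ζ (R⁻¹ • (x - x₀))) ⊆
      Metric.closedBall x₀ (R / 2) := by
    intro x hx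
    have h1 : R⁻¹ • (x - x₀) ∈ Function.support ζ := by
      intro h0
      exact hx (by simp [h0])
    rw [ζ.support_eq, mem_ball_zero_iff, norm_smul, norm_inv, Real.norm_of_nonneg hR.le,
      inv_mul_lt_iff₀ hR] at h1
    rw [mem_closedBall_iff_norm]
    have : ζ.rOut = 1 / 2 := rfl
    rw [this] at h1
    linarith
  have hts : tsupport (fun x => c * ζ (R⁻¹ • (x - x₀))) ⊆ Metric.closedBall x₀ (R / 2) :=
    closure_minimal hsupp Metric.isClosed_closedBall
  have hball : Metric.closedBall x₀ (R / 2) ⊆ Metric.ball x₀ R :=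
    Metric.closedBall_subset_ball (by linarith)
  refine ⟨fun x => c * ζ (R⁻¹ • (x - x₀)), ?_, ?_, hts.trans hball, ?_, ?_, ?_, ?_⟩
  · exact contDiff_const.mul
      (hζ.comp ((contDiff_const_smul _).comp (contDiff_id.sub contDiff_const)))
  · exact HasCompactSupport.of_support_subset_isCompact (isCompact_closedBall _ _) hsupp
  · exact fun x => mul_nonneg hc0.le ζ.nonneg
  · exact fun x => (mul_le_of_le_one_right hc0.le ζ.le_one).trans (le_max_left _ _)
  · rw [setAverage_eq, setIntegral_eq_integral_of_forall_compl_eq_zero (fun x hx => by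
      by_contra h0
      exact hx (hball (hsupp h0))), integral_const_mul,
      integral_sub_right_eq_self (fun x => ζ (R⁻¹ • x)) x₀, Measure.integral_comp_smul,
      measureReal_def, Measure.addHaar_ball_of_pos _ _ hR, ENNReal.toReal_mul,
      ENNReal.toReal_ofReal (by positivity), ← measureReal_def, hc, inv_pow, inv_inv,
      abs_of_nonneg (by positivity)]
    simp only [smul_eq_mul]
    field_simp
  · intro x
    have hd : HasFDerivAt (fun x => c * ζ (R⁻¹ • (x - x₀)))
        (c • (fderiv ℝ ζ (R⁻¹ • (x - x₀))).comp (R⁻¹ • ContinuousLinearMap.id ℝ (Spc n))) x := by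
      refine HasFDerivAt.const_mul ?_ c
      refine HasFDerivAt.comp (g := ζ) (f := fun x => R⁻¹ • (x - x₀)) x
        ((hζ.differentiable (by simp)) _).hasFDerivAt ?_
      exact ((hasFDerivAt_id x).sub_const x₀).const_smul R⁻¹
    rw [gradient, LinearIsometryEquiv.norm_map, hd.fderiv, ContinuousLinearMap.comp_smul,
      ContinuousLinearMap.comp_id, norm_smul, norm_smul, norm_inv, Real.norm_of_nonneg hR.le,
      Real.norm_of_nonneg hc0.le]
    calc c * (R⁻¹ * ‖fderiv ℝ ζ (R⁻¹ • (x - x₀))‖) ≤ c * (R⁻¹ * M) := by gcongr; exact hM _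
      _ = c * M / R := by ring
      _ ≤ _ := by gcongr; exact le_max_left _ _

theorem gradient_apply (f : Spc n → ℝ) (x : Spc n) (j : Fin n) :
    gradient f x j = fderiv ℝ f x (EuclideanSpace.single j 1) := by
  have h : inner ℝ (gradient f x) (EuclideanSpace.single j 1) =
      fderiv ℝ f x (EuclideanSpace.single j 1) := InnerProductSpace.toDual_symm_apply
  rw [← h, EuclideanSpace.inner_single_right]
  simp

theorem aestronglyMeasurable_caratheodory {Z P V : Type*} [MeasurableSpace Z]
    [TopologicalSpace P] [TopologicalSpace.MetrizableSpace P] [SecondCountableTopology P]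
    [MeasurableSpace P] [OpensMeasurableSpace P] [NormedAddCommGroup V] [MeasurableSpace V]
    [BorelSpace V] [SecondCountableTopology V] {m : Measure Z} {A : Z → P → V}
    (hA : ∀ w, Measurable fun z => A z w) (hc : ∀ᵐ z ∂m, Continuous (A z)) {f : Z → P}
    (hf : Measurable f) : AEStronglyMeasurable (fun z => A z (f z)) m := by
  classical
  set s := toMeasurable m {z | ¬ Continuous (A z)} with hs
  have hs0 : m s = 0 := by rw [hs, measure_toMeasurable]; exact hc
  have hsm : MeasurableSet s := measurableSet_toMeasurable _ _
  have h1 : StronglyMeasurable (Function.uncurry fun (w : P) (z : Z) =>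
      sᶜ.indicator (fun z => A z w) z) := by
    refine stronglyMeasurable_uncurry_of_continuous_of_stronglyMeasurable (fun z => ?_)
      fun w => ((hA w).indicator hsm.compl).stronglyMeasurable
    by_cases hz : z ∈ s
    · simp [hz, continuous_const]
    · have : Continuous (A z) := by
        by_contra h
        exact hz (subset_toMeasurable _ _ h)
      simpa [hz] using this
  refine ⟨fun z => sᶜ.indicator (fun z' => A z' (f z)) z,
    h1.comp_measurable (hf.prodMk measurable_id), ?_⟩
  have : ∀ᵐ z ∂m, z ∉ s := by
    rw [ae_iff]; simpa using hs0
  filter_upwards [this] with z hz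
  simp [hz]

theorem norm_integral_segment_le {V : Type*} [NormedAddCommGroup V] [NormedSpace ℝ V]
    {k : ℝ → V} (hk : Integrable k) (x v : ℝ) :
    ‖∫ s in Ioc (0 : ℝ) 1, v • k (x + s * v)‖ ≤ ∫ t, ‖k t‖ := by
  rcases eq_or_ne v 0 with rfl | hv
  · simpa using integral_nonneg fun t => norm_nonneg (k t)
  have h1 : Integrable fun s => ‖v • k (x + s * v)‖ :=
    (((hk.comp_add_left x).comp_mul_right' hv).smul v).norm
  calc ‖∫ s in Ioc (0 : ℝ) 1, v • k (x + s * v)‖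
      ≤ ∫ s in Ioc (0 : ℝ) 1, ‖v • k (x + s * v)‖ := norm_integral_le_integral_norm _
    _ ≤ ∫ s, ‖v • k (x + s * v)‖ :=
        setIntegral_le_integral h1 (Eventually.of_forall fun s => norm_nonneg _)
    _ = ∫ t, ‖k t‖ := by
        simp only [norm_smul, Real.norm_eq_abs]
        rw [integral_const_mul, Measure.integral_comp_mul_right (fun y => ‖k (x + y)‖) v,
          integral_add_left_eq_self (fun y => ‖k y‖) x, smul_eq_mul, abs_inv,
          mul_inv_cancel_left₀ (abs_ne_zero.2 hv)]

theorem ae_ae_norm_sub_le_of_weak_deriv {V : Type*} [NormedAddCommGroup V] [NormedSpace ℝ V]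
    [CompleteSpace V] {I : Set ℝ} (hI : IsOpen I) (hIc : Convex ℝ I) {f k : ℝ → V}
    (hf : IntegrableOn f I) (hk : IntegrableOn k I) (hkm : StronglyMeasurable k)
    (h : ∀ ζ : ℝ → ℝ, ContDiff ℝ (⊤ : ℕ∞) ζ → HasCompactSupport ζ → tsupport ζ ⊆ I →
      ∫ t in I, deriv ζ t • f t = ∫ t in I, ζ t • k t) :
    ∀ᵐ t' ∂(volume.restrict I), ∀ᵐ t ∂(volume.restrict I), ‖f t - f t'‖ ≤ ∫ t in I, ‖k t‖ := by
  have hIm := hI.measurableSet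
  have hfi := hf.integrable_indicator hIm
  have hki := hk.integrable_indicator hIm
  set g := hfi.1.mk with hg
  have hgm : StronglyMeasurable g := hfi.1.stronglyMeasurable_mk
  have hfg : I.indicator f =ᵐ[volume] g := hfi.1.ae_eq_mk
  have hgi : Integrable g := hfi.congr hfg
  have key : ∀ v : ℝ, ∀ᵐ x : ℝ, x ∈ I → x + v ∈ I → ‖g (x + v) - g x‖ ≤ ∫ t in I, ‖k t‖ := by
    intro v
    have h1 := ae_sub_eq_integral_of_weak_lineDeriv (f := g)
      (f' := fun t => -(v • I.indicator k t)) hI hIc hgi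
      ((hkm.indicator hIm).const_smul v).neg (hki.smul v).neg v ?_
    · filter_upwards [h1] with x hx hxI hxv
      rw [hx hxI hxv, integral_neg, norm_neg]
      refine (norm_integral_segment_le hki x v).trans_eq ?_
      rw [← integral_indicator hIm]
      simp only [norm_indicator_eq_indicator_norm]
    · intro ψ hψ hψc hψs
      have e1 : ∫ x, (fderiv ℝ ψ x v) • g x = v • ∫ t in I, deriv ψ t • f t := by
        rw [← integral_indicator hIm, ← integral_smul]
        refine integral_congr_ae ?_
        filter_upwards [hfg] with x hx
        rw [← hx]
        by_cases hxI : x ∈ I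
        · simp [hxI, fderiv_eq_smul_deriv, mul_smul]
        · simp [hxI]
      rw [e1, h ψ hψ hψc hψs, ← integral_neg, ← integral_indicator hIm, ← integral_smul]
      refine integral_congr_ae (Eventually.of_forall fun x => ?_)
      by_cases hx : x ∈ I
      · simp [hx, smul_comm v]
      · simp [hx]
  have hms : MeasurableSet {w : ℝ × ℝ | w.2 ∈ I → w.2 + w.1 ∈ I →
      ‖g (w.2 + w.1) - g w.2‖ ≤ ∫ t in I, ‖k t‖} := by
    have e : {w : ℝ × ℝ | w.2 ∈ I → w.2 + w.1 ∈ I →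
        ‖g (w.2 + w.1) - g w.2‖ ≤ ∫ t in I, ‖k t‖} = (Prod.snd ⁻¹' I)ᶜ ∪
          (((fun w : ℝ × ℝ => w.2 + w.1) ⁻¹' I)ᶜ ∪
            {w | ‖g (w.2 + w.1) - g w.2‖ ≤ ∫ t in I, ‖k t‖}) := by
      ext w; simp only [mem_ofPred_eq, mem_union, mem_compl_iff, mem_preimage]; tauto
    rw [e]
    refine (hIm.preimage measurable_snd).compl.union
      ((hIm.preimage (measurable_snd.add measurable_fst)).compl.union ?_)
    exact measurableSet_le
      ((hgm.comp_measurable (measurable_snd.add measurable_fst)).sub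
        (hgm.comp_measurable measurable_snd)).norm.measurable measurable_const
  have key2 := (Measure.ae_ae_comm (p := fun v x : ℝ => x ∈ I → x + v ∈ I →
    ‖g (x + v) - g x‖ ≤ ∫ t in I, ‖k t‖) (μ := volume) (ν := volume) hms).1
    (Eventually.of_forall key)
  have hfg' : ∀ᵐ t ∂(volume.restrict I), f t = g t := by
    rw [ae_restrict_iff' hIm]
    filter_upwards [hfg] with t ht htI
    rw [← ht, indicator_of_mem htI]
  filter_upwards [ae_restrict_of_ae key2, ae_restrict_mem hIm, hfg'] with t' ht' ht'I e'
  have h3 : ∀ᵐ t : ℝ, t ∈ I → ‖g t - g t'‖ ≤ ∫ t in I, ‖k t‖ := by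
    filter_upwards [(measurePreserving_add_left volume (-t')).quasiMeasurePreserving.ae ht']
      with t ht htI
    have := ht ht'I
    simp only [add_neg_cancel_left] at this
    exact this htI
  filter_upwards [ae_restrict_of_ae h3, ae_restrict_mem hIm, hfg'] with t ht htI e
  rw [e, e']
  exact ht htI

theorem ae_ae_norm_integral_sub_le_of_weak_deriv {X V : Type*} [MeasurableSpace X]
    [NormedAddCommGroup V] [NormedSpace ℝ V] [CompleteSpace V] {α : Measure X} [SFinite α]
    {I : Set ℝ} (hI : IsOpen I) (hIc : Convex ℝ I) {w k : X × ℝ → V}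
    (hw : Integrable w (α.prod (volume.restrict I)))
    (hk : Integrable k (α.prod (volume.restrict I)))
    (hkm : StronglyMeasurable k)
    (h : ∀ ζ : ℝ → ℝ, ContDiff ℝ (⊤ : ℕ∞) ζ → HasCompactSupport ζ → tsupport ζ ⊆ I →
      ∫ z, deriv ζ z.2 • w z ∂(α.prod (volume.restrict I))
        = ∫ z, ζ z.2 • k z ∂(α.prod (volume.restrict I))) :
    ∀ᵐ t' ∂(volume.restrict I), ∀ᵐ t ∂(volume.restrict I),
      ‖(∫ x, w (x, t) ∂α) - ∫ x, w (x, t') ∂α‖ ≤ ∫ z, ‖k z‖ ∂(α.prod (volume.restrict I)) := by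
  have hmul : ∀ {θ : ℝ → ℝ} {l : X × ℝ → V}, Continuous θ → HasCompactSupport θ →
      Integrable l (α.prod (volume.restrict I)) →
      ∫ t in I, θ t • ∫ x, l (x, t) ∂α = ∫ z, θ z.2 • l z ∂(α.prod (volume.restrict I)) := by
    intro θ l hθ hθc hl
    obtain ⟨C, hC⟩ := hθc.exists_bound_of_continuous hθ
    have hi : Integrable (fun z : X × ℝ => θ z.2 • l z) (α.prod (volume.restrict I)) :=
      hl.bdd_smul C (hθ.stronglyMeasurable.comp_measurable measurable_snd).aestronglyMeasurable
        (Eventually.of_forall fun z => hC _)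
    rw [integral_prod_symm _ hi]
    simp only [integral_smul]
  have key := ae_ae_norm_sub_le_of_weak_deriv hI hIc hw.integral_prod_right hk.integral_prod_right
    hkm.integral_prod_left' (fun ζ hζ hζc hζs => by
      rw [hmul (hζ.continuous_deriv (by simp)) hζc.deriv hw, hmul hζ.continuous hζc hk]
      exact h ζ hζ hζc hζs)
  filter_upwards [key] with t' ht'
  filter_upwards [ht'] with t ht
  refine ht.trans ?_
  rw [integral_prod_symm _ hk.norm]
  exact integral_mono hk.integral_prod_right.norm hk.norm.integral_prod_right
    fun t => norm_integral_le_integral_norm _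

theorem matVec_add (M M' : Mat N n) (h : Spc n) :
    matVec (M + M') h = matVec M h + matVec M' h := by
  ext i
  simp [matVec_apply, add_mul, Finset.sum_add_distrib]

theorem matVec_smul (c : ℝ) (M : Mat N n) (h : Spc n) : matVec (c • M) h = c • matVec M h := by
  ext i
  simp [matVec_apply, mul_assoc, Finset.mul_sum]

/-- The test function `(x, t) ↦ ζ(t) η(x) eᵢ`. -/
def splitTest (η : Spc n → ℝ) (ζ : ℝ → ℝ) (i : Fin N) (z : Spc n × ℝ) : Vec N :=
  (ζ z.2 * η z.1) • EuclideanSpace.single i (1 : ℝ)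

theorem inner_tderiv_splitTest {η : Spc n → ℝ} {ζ : ℝ → ℝ} (hζ : Differentiable ℝ ζ) (i : Fin N)
    (v : Vec N) (z : Spc n × ℝ) :
    inner ℝ v (tderiv (splitTest η ζ i) z) = deriv ζ z.2 * (η z.1 * v i) := by
  have h : HasDerivAt (fun s => splitTest η ζ i (z.1, s))
      ((deriv ζ z.2 * η z.1) • EuclideanSpace.single i (1 : ℝ)) z.2 :=
    ((hζ z.2).hasDerivAt.mul_const (η z.1)).smul_const _
  rw [tderiv, h.deriv, inner_smul_right, EuclideanSpace.inner_single_right]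
  simp
  ring

theorem gradPair_splitTest {η : Spc n → ℝ} {ζ : ℝ → ℝ} (hη : Differentiable ℝ η) (i : Fin N)
    (M : Spc n × ℝ → Mat N n) (z : Spc n × ℝ) :
    gradPair M (splitTest η ζ i) z = ζ z.2 * matVec (M z) (gradient η z.1) i := by
  have h : ∀ k j, pderivS j (fun w => splitTest η ζ i w k) z =
      if k = i then ζ z.2 * gradient η z.1 j else 0 := by
    intro k j
    by_cases hk : k = i
    · subst hk
      rw [if_pos rfl, gradient_apply, pderivS]
      have : (fun y => splitTest η ζ k (y, z.2) k) = fun y => ζ z.2 * η y := by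
        ext y; simp [splitTest]
      rw [this, fderiv_const_mul (hη _)]
      simp
    · rw [if_neg hk, pderivS]
      have : (fun y => splitTest η ζ i (y, z.2) k) = fun y => 0 := by
        ext y; simp [splitTest, hk]
      rw [this]
      simp
  simp only [gradPair, h, mul_ite, mul_zero, matVec_apply]
  rw [Finset.sum_comm]
  simp only [Finset.sum_ite_eq', Finset.mem_univ, if_true, Finset.mul_sum]
  exact Finset.sum_congr rfl fun j _ => by ring

theorem gradient_eq_zero_of_notMem_tsupport {η : Spc n → ℝ} {x : Spc n} (hx : x ∉ tsupport η) :
    gradient η x = 0 := by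
  have : fderiv ℝ η x = 0 := image_eq_zero_of_notMem_tsupport
    fun h => hx (tsupport_fderiv_subset ℝ h)
  rw [gradient, this, map_zero]

theorem WeakSolution.integral_deriv_smul_eq {p ν L T : ℝ} {Ω : Set (Spc n)}
    {A : Spc n × ℝ → Vec N → Mat N n → Mat N n} {F : Spc n × ℝ → Mat N n}
    {u : Spc n × ℝ → Vec N} {Du : Spc n × ℝ → Mat N n} (hsol : WeakSolution p ν L T Ω A F u Du)
    {B : Set (Spc n)} {I : Set ℝ}
    (hQ : B ×ˢ I ⊆ Ω ×ˢ Ioo 0 T)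
    (iu : IntegrableOn (fun z => ‖u z‖ ^ (p - 2) • u z) (B ×ˢ I))
    (iA : IntegrableOn (fun z => A z (u z) (Du z)) (B ×ˢ I))
    (iF : IntegrableOn (fun z => ‖F z‖ ^ (p - 2) • F z) (B ×ˢ I))
    {η : Spc n → ℝ} (hη : ContDiff ℝ (⊤ : ℕ∞) η) (hηc : HasCompactSupport η)
    (hηs : tsupport η ⊆ B) {ζ : ℝ → ℝ} (hζ : ContDiff ℝ (⊤ : ℕ∞) ζ) (hζc : HasCompactSupport ζ)
    (hζs : tsupport ζ ⊆ I) :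
    ∫ z in B ×ˢ I, deriv ζ z.2 • (η z.1 • (‖u z‖ ^ (p - 2) • u z))
      = ∫ z in B ×ˢ I, ζ z.2 •
          matVec (A z (u z) (Du z) + ‖F z‖ ^ (p - 2) • F z) (gradient η z.1) := by
  have hgc : Continuous (gradient η) :=
    (InnerProductSpace.toDual ℝ (Spc n)).symm.continuous.comp (hη.continuous_fderiv (by simp))
  have hgs : HasCompactSupport (gradient η) :=
    (hηc.fderiv (𝕜 := ℝ)).comp_left (g := (InnerProductSpace.toDual ℝ (Spc n)).symm) (map_zero _)
  obtain ⟨Cg, hCg⟩ := hgs.exists_bound_of_continuous hgc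
  obtain ⟨Cη, hCη⟩ := hηc.exists_bound_of_continuous hη.continuous
  obtain ⟨Cζ, hCζ⟩ := hζc.exists_bound_of_continuous hζ.continuous
  obtain ⟨Cd, hCd⟩ := hζc.deriv.exists_bound_of_continuous (hζ.continuous_deriv (by simp))
  have bdd : ∀ {θ : Spc n × ℝ → ℝ} {C : ℝ} {f : Spc n × ℝ → Vec N}, Continuous θ →
      (∀ z, ‖θ z‖ ≤ C) → IntegrableOn f (B ×ˢ I) → IntegrableOn (fun z => θ z • f z) (B ×ˢ I) :=
    fun hθ hC hf => hf.bdd_smul _ hθ.aestronglyMeasurable (Eventually.of_forall hC)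
  have imat : ∀ {M : Spc n × ℝ → Mat N n}, IntegrableOn M (B ×ˢ I) →
      IntegrableOn (fun z => ζ z.2 • matVec (M z) (gradient η z.1)) (B ×ˢ I) := by
    intro M hM
    refine bdd (hζ.continuous.comp continuous_snd) (fun z => hCζ z.2) ?_
    refine (hM.norm.mul_const Cg).mono' ?_ (Eventually.of_forall fun z => ?_)
    · exact continuous_matVec.comp_aestronglyMeasurable
        (hM.1.prodMk (hgc.comp continuous_fst).aestronglyMeasurable)
    · exact (norm_matVec_le _ _).trans (by gcongr; exact hCg _)
  have iw : IntegrableOn (fun z => deriv ζ z.2 • (η z.1 • (‖u z‖ ^ (p - 2) • u z))) (B ×ˢ I) := by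
    exact bdd ((hζ.continuous_deriv (by simp)).comp continuous_snd) (fun z => hCd z.2)
      (bdd (hη.continuous.comp continuous_fst) (fun z => hCη z.1) iu)
  have iAF : IntegrableOn (fun z => ζ z.2 •
      matVec (A z (u z) (Du z) + ‖F z‖ ^ (p - 2) • F z) (gradient η z.1)) (B ×ˢ I) :=
    imat (iA.add iF)
  have hts : ∀ i : Fin N, tsupport (splitTest η ζ i) ⊆ tsupport η ×ˢ tsupport ζ := by
    intro i
    refine closure_minimal (fun z hz => ?_) ((isClosed_tsupport _).prod (isClosed_tsupport _))
    by_contra h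
    rw [mem_prod, not_and_or] at h
    apply hz
    rcases h with h | h
    · simp [splitTest, image_eq_zero_of_notMem_tsupport h]
    · simp [splitTest, image_eq_zero_of_notMem_tsupport h]
  have hout : ∀ z, z ∉ B ×ˢ I →
      (ζ z.2 = 0 ∧ deriv ζ z.2 = 0) ∨ (η z.1 = 0 ∧ gradient η z.1 = 0) := by
    intro z hz
    rw [mem_prod, not_and_or] at hz
    rcases hz with h | h
    · exact Or.inr ⟨image_eq_zero_of_notMem_tsupport fun h' => h (hηs h'),
        gradient_eq_zero_of_notMem_tsupport fun h' => h (hηs h')⟩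
    · exact Or.inl ⟨image_eq_zero_of_notMem_tsupport fun h' => h (hζs h'),
        image_eq_zero_of_notMem_tsupport fun h' => h (hζs (tsupport_deriv_subset h'))⟩
  have hmat0 : ∀ M : Mat N n, matVec M (0 : Spc n) = 0 := fun M => by
    ext i; simp [matVec_apply]
  have hΩ : MeasurableSet (Ω ×ˢ Ioo 0 T) := (hsol.openΩ.prod isOpen_Ioo).measurableSet
  ext i
  rw [integral_vec_apply iw, integral_vec_apply iAF]
  have hform := hsol.weakForm (splitTest η ζ i)
    (((hζ.comp contDiff_snd).mul (hη.comp contDiff_fst)).smul contDiff_const)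
    ((hηc.isCompact.prod hζc.isCompact).of_isClosed_subset (isClosed_tsupport _) (hts i))
    ((hts i).trans ((prod_mono hηs hζs).trans hQ))
  simp only [inner_tderiv_splitTest (hζ.differentiable (by simp)),
    gradPair_splitTest (hη.differentiable (by simp))] at hform
  rw [setIntegral_eq_of_subset_of_forall_sdiff_eq_zero hΩ hQ (fun z hz => by
      rcases hout z hz.2 with h | h <;> simp [h, hmat0]),
    setIntegral_eq_of_subset_of_forall_sdiff_eq_zero hΩ hQ (fun z hz => by
      rcases hout z hz.2 with h | h <;> simp [h, hmat0])] at hform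
  have proj : ∀ {f : Spc n × ℝ → Vec N}, IntegrableOn f (B ×ˢ I) →
      Integrable (fun z => f z i) (volume.restrict (B ×ˢ I)) := fun hf =>
    (EuclideanSpace.proj (𝕜 := ℝ) i).integrable_comp hf
  have e1 : ∀ z, ‖u z‖ ^ (p - 2) * (deriv ζ z.2 * (η z.1 * u z i)) -
      ζ z.2 * matVec (A z (u z) (Du z)) (gradient η z.1) i =
      (deriv ζ z.2 • (η z.1 • (‖u z‖ ^ (p - 2) • u z))) i -
        (ζ z.2 • matVec (A z (u z) (Du z)) (gradient η z.1)) i := fun z => by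
    simp; ring
  have e2 : ∀ z, ‖F z‖ ^ (p - 2) * (ζ z.2 * matVec (F z) (gradient η z.1) i) =
      (ζ z.2 • matVec (‖F z‖ ^ (p - 2) • F z) (gradient η z.1)) i := fun z => by
    simp [matVec_smul]; ring
  simp only [e1, e2] at hform
  rw [integral_sub (proj iw) (proj (imat iA)), sub_eq_iff_eq_add, add_comm,
    ← integral_add (proj (imat iA)) (proj (imat iF))] at hform
  rw [hform]
  simp only [matVec_add, smul_add, PiLp.add_apply]

theorem norm_norm_rpow_smul_self {V : Type*} [NormedAddCommGroup V] [NormedSpace ℝ V] {p : ℝ}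
    (hp : 2 ≤ p) (v : V) : ‖‖v‖ ^ (p - 2) • v‖ = ‖v‖ ^ (p - 1) := by
  rw [norm_smul, Real.norm_of_nonneg (by positivity)]
  rcases eq_or_ne v 0 with rfl | hv
  · rw [norm_zero, mul_zero, Real.zero_rpow (by linarith)]
  · rw [← Real.rpow_add_one (norm_ne_zero_iff.2 hv)]
    congr 1; ring

theorem integrable_norm_rpow_smul_self {X V : Type*} [MeasurableSpace X] [NormedAddCommGroup V]
    [NormedSpace ℝ V] {m : Measure X} [IsFiniteMeasure m] {w : X → V} {p : ℝ} (hp : 2 ≤ p)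
    (hw : MemLp w (ENNReal.ofReal p) m) : Integrable (fun x => ‖w x‖ ^ (p - 2) • w x) m := by
  refine (integrable_norm_rpow_of_memLp hw (by linarith : 0 < p - 1) (by linarith)).mono'
    ((hw.1.norm.aemeasurable.pow_const _).aestronglyMeasurable.smul hw.1)
    (Eventually.of_forall fun x => (norm_norm_rpow_smul_self hp _).le)

theorem WeakSolution.isFiniteMeasure_restrict {p ν L T : ℝ} {Ω : Set (Spc n)}
    {A : Spc n × ℝ → Vec N → Mat N n → Mat N n} {F : Spc n × ℝ → Mat N n}
    {u : Spc n × ℝ → Vec N} {Du : Spc n × ℝ → Mat N n} (hsol : WeakSolution p ν L T Ω A F u Du)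
    {Q : Set (Spc n × ℝ)} (hQ : Q ⊆ Ω ×ˢ Ioo 0 T) : IsFiniteMeasure (volume.restrict Q) := by
  have : volume Q < ∞ :=
    (measure_mono hQ).trans_lt (hsol.bddΩ.prod (Metric.isBounded_Ioo 0 T)).measure_lt_top
  exact ⟨by simpa using this⟩

theorem WeakSolution.ae_ae_norm_integral_sub_le {p ν L T : ℝ} {Ω : Set (Spc n)}
    {A : Spc n × ℝ → Vec N → Mat N n → Mat N n} {F : Spc n × ℝ → Mat N n}
    {u : Spc n × ℝ → Vec N} {Du : Spc n × ℝ → Mat N n} (hsol : WeakSolution p ν L T Ω A F u Du)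
    (hp : 2 ≤ p) {B : Set (Spc n)} {I : Set ℝ} (hI : IsOpen I) (hIc : Convex ℝ I)
    (hQ : B ×ˢ I ⊆ Ω ×ˢ Ioo 0 T) {η : Spc n → ℝ} (hη : ContDiff ℝ (⊤ : ℕ∞) η)
    (hηc : HasCompactSupport η) (hηs : tsupport η ⊆ B) {Cg : ℝ} (hCg : ∀ x, ‖gradient η x‖ ≤ Cg) :
    ∀ᵐ t' ∂(volume.restrict I), ∀ᵐ t ∂(volume.restrict I),
      ‖(∫ x in B, η x • (‖u (x, t)‖ ^ (p - 2) • u (x, t)))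
        - ∫ x in B, η x • (‖u (x, t')‖ ^ (p - 2) • u (x, t'))‖
      ≤ max L 1 * Cg * ∫ z in B ×ˢ I, (‖Du z‖ ^ (p - 1) + ‖F z‖ ^ (p - 1)) := by
  have hfin := hsol.isFiniteMeasure_restrict hQ
  have hle : volume.restrict (B ×ˢ I) ≤ volume.restrict (Ω ×ˢ Ioo 0 T) :=
    Measure.restrict_mono hQ le_rfl
  have hp1 : 0 < p - 1 := by linarith
  have iu := integrable_norm_rpow_smul_self hp (hsol.memLp_u.mono_measure hle)
  have iF := integrable_norm_rpow_smul_self hp (hsol.memLp_F.mono_measure hle)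
  have iDr := integrable_norm_rpow_of_memLp (hsol.memLp_Du.mono_measure hle) hp1 (by linarith)
  have iFr := integrable_norm_rpow_of_memLp (hsol.memLp_F.mono_measure hle) hp1 (by linarith)
  have hgrow := ae_mono hle hsol.growth
  have iA : Integrable (fun z => A z (u z) (Du z)) (volume.restrict (B ×ˢ I)) := by
    refine (iDr.const_mul L).mono' ?_ (by filter_upwards [hgrow] with z hz using hz _ _)
    exact aestronglyMeasurable_caratheodory (A := fun z (w : Vec N × Mat N n) => A z w.1 w.2)
      (fun w => hsol.measA w.1 w.2) (ae_mono hle hsol.contA) (hsol.measu.prodMk hsol.measDu)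
  have iS := iA.add iF
  set S := iS.1.mk with hS
  have hSm : StronglyMeasurable S := iS.1.stronglyMeasurable_mk
  have hSe : ∀ᵐ z ∂(volume.restrict (B ×ˢ I)),
      A z (u z) (Du z) + ‖F z‖ ^ (p - 2) • F z = S z := iS.1.ae_eq_mk
  have hgc : Continuous (gradient η) :=
    (InnerProductSpace.toDual ℝ (Spc n)).symm.continuous.comp (hη.continuous_fderiv (by simp))
  have hkm : StronglyMeasurable fun z : Spc n × ℝ => matVec (S z) (gradient η z.1) :=
    continuous_matVec.comp_stronglyMeasurable
      (hSm.prodMk (hgc.comp continuous_fst).stronglyMeasurable)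
  have hkb : ∀ᵐ z ∂(volume.restrict (B ×ˢ I)), ‖matVec (S z) (gradient η z.1)‖ ≤
      max L 1 * Cg * (‖Du z‖ ^ (p - 1) + ‖F z‖ ^ (p - 1)) := by
    filter_upwards [hSe, hgrow] with z hz hz'
    have hCg0 : 0 ≤ Cg := (norm_nonneg _).trans (hCg z.1)
    rw [← hz]
    calc _ ≤ ‖A z (u z) (Du z) + ‖F z‖ ^ (p - 2) • F z‖ * ‖gradient η z.1‖ := norm_matVec_le _ _
      _ ≤ (max L 1 * ‖Du z‖ ^ (p - 1) + max L 1 * ‖F z‖ ^ (p - 1)) * Cg := by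
          gcongr
          · refine (norm_add_le _ _).trans (add_le_add ((hz' _ _).trans ?_) ?_)
            · gcongr; exact le_max_left _ _
            · rw [norm_norm_rpow_smul_self hp]
              exact le_mul_of_one_le_left (by positivity) (le_max_right _ _)
          · exact hCg _
      _ = _ := by ring
  have ir := (iDr.add iFr).const_mul (max L 1 * Cg)
  have ik : Integrable (fun z : Spc n × ℝ => matVec (S z) (gradient η z.1))
      (volume.restrict (B ×ˢ I)) := ir.mono' hkm.aestronglyMeasurable hkb
  obtain ⟨Cη, hCη⟩ := hηc.exists_bound_of_continuous hη.continuous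
  have iw : Integrable (fun z : Spc n × ℝ => η z.1 • (‖u z‖ ^ (p - 2) • u z))
      (volume.restrict (B ×ˢ I)) :=
    iu.bdd_smul Cη (hη.continuous.comp continuous_fst).aestronglyMeasurable
      (Eventually.of_forall fun z => hCη z.1)
  have htest : ∀ ζ : ℝ → ℝ, ContDiff ℝ (⊤ : ℕ∞) ζ → HasCompactSupport ζ → tsupport ζ ⊆ I →
      ∫ z in B ×ˢ I, deriv ζ z.2 • (η z.1 • (‖u z‖ ^ (p - 2) • u z))
        = ∫ z in B ×ˢ I, ζ z.2 • matVec (S z) (gradient η z.1) := by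
    intro ζ hζ hζc hζs
    rw [hsol.integral_deriv_smul_eq hQ iu iA iF hη hηc hηs hζ hζc hζs]
    refine integral_congr_ae ?_
    filter_upwards [hSe] with z hz
    rw [hz]
  have hprod : volume.restrict (B ×ˢ I) =
      (volume.restrict B : Measure (Spc n)).prod (volume.restrict I : Measure ℝ) := by
    rw [Measure.volume_eq_prod, Measure.prod_restrict]
  have hSint : ∫ z in B ×ˢ I, ‖matVec (S z) (gradient η z.1)‖ ≤
      max L 1 * Cg * ∫ z in B ×ˢ I, (‖Du z‖ ^ (p - 1) + ‖F z‖ ^ (p - 1)) := by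
    rw [← integral_const_mul]
    exact integral_mono_ae ik.norm ir hkb
  rw [hprod] at iw ik htest hSint
  have key := ae_ae_norm_integral_sub_le_of_weak_deriv hI hIc iw ik hkm htest
  rw [← hprod] at key hSint
  filter_upwards [key] with t' ht'
  filter_upwards [ht'] with t ht
  exact ht.trans hSint

theorem lintegral_enorm_sub_integral_rpow_le {X V : Type*} [MeasurableSpace X]
    [NormedAddCommGroup V] [NormedSpace ℝ V] [CompleteSpace V] {P : Measure X}
    [IsProbabilityMeasure P] {u : X → V} (hu : Integrable u P) {p q : ℝ} (hq : 1 ≤ q) (hqp : q ≤ p)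
    (b : V) : ∫⁻ x, ‖u x - ∫ y, u y ∂P‖ₑ ^ q ∂P ≤ 2 ^ p * (2 * ∫⁻ x, ‖u x - b‖ₑ ^ q ∂P) := by
  have hm : AEMeasurable (fun x => ‖u x - b‖ₑ) P := (hu.1.sub aestronglyMeasurable_const).enorm
  have h1 : ‖b - ∫ y, u y ∂P‖ₑ ^ q ≤ ∫⁻ x, ‖u x - b‖ₑ ^ q ∂P := by
    refine le_trans ?_ (rpow_lintegral_le_lintegral_rpow P hm hq)
    gcongr
    have e : ∫ y, (u y - b) ∂P = (∫ y, u y ∂P) - b := by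
      rw [integral_sub hu (integrable_const b)]; simp
    rw [enorm_sub_rev, ← e]
    exact enorm_integral_le_lintegral_enorm _
  calc ∫⁻ x, ‖u x - ∫ y, u y ∂P‖ₑ ^ q ∂P
      ≤ ∫⁻ x, 2 ^ p * (‖u x - b‖ₑ ^ q + ∫⁻ x, ‖u x - b‖ₑ ^ q ∂P) ∂P := by
        refine lintegral_mono fun x => ?_
        rw [← sub_add_sub_cancel (u x) b]
        exact (enorm_add_rpow_le _ _ hq hqp).trans (by gcongr)
    _ = _ := by
        rw [lintegral_const_mul' _ _ (by finiteness), lintegral_add_right _ measurable_const,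
          lintegral_const, measure_univ, mul_one, two_mul]

theorem integral_rpow_add_rpow_le {X V W : Type*} [MeasurableSpace X] [NormedAddCommGroup V]
    [NormedAddCommGroup W] {P : Measure X} [IsProbabilityMeasure P] {f : X → V} {g : X → W}
    {p k r : ℝ} (hf : MemLp f (ENNReal.ofReal p) P) (hg : MemLp g (ENNReal.ofReal p) P)
    (hk : 0 < k) (hkr : k ≤ r) (hrp : r ≤ p) :
    ∫ x, (‖f x‖ ^ k + ‖g x‖ ^ k) ∂P ≤ 2 * (∫ x, (‖f x‖ ^ r + ‖g x‖ ^ r) ∂P) ^ (k / r) := by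
  have hr : 0 < r := hk.trans_le hkr
  rw [integral_add (integrable_norm_rpow_of_memLp hf hk (hkr.trans hrp))
      (integrable_norm_rpow_of_memLp hg hk (hkr.trans hrp)),
    integral_add (integrable_norm_rpow_of_memLp hf hr hrp)
      (integrable_norm_rpow_of_memLp hg hr hrp)]
  have h1 := integral_norm_rpow_le_rpow hf hk hkr hrp
  have h2 := integral_norm_rpow_le_rpow hg hk hkr hrp
  have hf0 : 0 ≤ ∫ x, ‖f x‖ ^ r ∂P := integral_nonneg fun x => by positivity
  have hg0 : 0 ≤ ∫ x, ‖g x‖ ^ r ∂P := integral_nonneg fun x => by positivity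
  have h3 := Real.rpow_le_rpow hf0 (le_add_of_nonneg_right hg0) (by positivity : 0 ≤ k / r)
  have h4 := Real.rpow_le_rpow hg0 (le_add_of_nonneg_left hf0) (by positivity : 0 ≤ k / r)
  linarith

theorem inv_smul_restrict_prod {X Y : Type*} [MeasurableSpace X] [MeasurableSpace Y]
    {m : Measure X} {m' : Measure Y} [SFinite m] [SFinite m'] {B : Set X} {I : Set Y}
    (hB : m B ≠ ∞) (hB0 : m B ≠ 0) :
    ((m B)⁻¹ • m.restrict B).prod ((m' I)⁻¹ • m'.restrict I)
      = ((m.prod m') (B ×ˢ I))⁻¹ • (m.prod m').restrict (B ×ˢ I) := by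
  rw [Measure.prod_smul_left, Measure.prod_smul_right, smul_smul, Measure.prod_restrict,
    Measure.prod_prod, ENNReal.mul_inv (Or.inl hB0) (Or.inl hB)]

theorem poincare_normalized {u : Spc n × ℝ → Vec N} {Du F : Spc n × ℝ → Mat N n}
    (hu : Measurable u) (hDu : Measurable Du) (x₀ : Spc n) {R : ℝ} (hR : 0 < R) {I : Set ℝ}
    (hI : IsOpen I) (hIc : Convex ℝ I)
    (iu : IntegrableOn u (Metric.ball x₀ R ×ˢ I))
    (iDu : IntegrableOn Du (Metric.ball x₀ R ×ˢ I))
    (hw : ∀ ψ : Spc n × ℝ → ℝ, ContDiff ℝ (⊤ : ℕ∞) ψ → HasCompactSupport ψ →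
      tsupport ψ ⊆ Metric.ball x₀ R ×ˢ I → ∀ (i : Fin N) (j : Fin n),
      ∫ z in Metric.ball x₀ R ×ˢ I, u z i * pderivS j ψ z
        = - ∫ z in Metric.ball x₀ R ×ˢ I, Du z (i, j) * ψ z)
    {α : Measure (Spc n)} {P : Measure (Spc n × ℝ)}
    (hα : α = (volume (Metric.ball x₀ R))⁻¹ • volume.restrict (Metric.ball x₀ R))
    (hP : P = (volume (Metric.ball x₀ R ×ˢ I))⁻¹ • volume.restrict (Metric.ball x₀ R ×ˢ I))
    {p r : ℝ} (hr : 1 ≤ r) (hrp : r ≤ p) (iDr : Integrable (fun z => ‖Du z‖ ^ r) P)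
    (iFr : Integrable (fun z => ‖F z‖ ^ r) P) :
    ∫⁻ z, ∫⁻ y, ‖u (y, z.2) - u z‖ₑ ^ r ∂α ∂P ≤
      ENNReal.ofReal (2 ^ n * 2 ^ p * (R ^ r * ∫ z, (‖Du z‖ ^ r + ‖F z‖ ^ r) ∂P)) := by
  have hr0 : 0 ≤ r := by linarith
  have hB0 : volume (Metric.ball x₀ R) ≠ 0 := (Metric.measure_ball_pos _ _ hR).ne'
  have hB1 : volume (Metric.ball x₀ R) ≠ ∞ := measure_ball_lt_top.ne
  have h := poincare_double_integral hu hDu x₀ R hI hIc iu iDu hw hr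
  have hball : volume (Metric.ball (0 : Spc n) (2 * R)) =
      ENNReal.ofReal (2 ^ n) * volume (Metric.ball x₀ R) := by
    rw [Measure.addHaar_ball_mul_of_pos _ _ two_pos, Measure.addHaar_ball_center _ x₀]
    simp
  set E := ∫⁻ z in Metric.ball x₀ R ×ˢ I, ‖Du z‖ₑ ^ r with hE
  have hPE : ∫⁻ z, ‖Du z‖ₑ ^ r ∂P = (volume (Metric.ball x₀ R ×ˢ I))⁻¹ * E := by
    rw [hP, lintegral_smul_measure, smul_eq_mul]
  calc ∫⁻ z, ∫⁻ y, ‖u (y, z.2) - u z‖ₑ ^ r ∂α ∂P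
      = (volume (Metric.ball x₀ R ×ˢ I))⁻¹ * ((volume (Metric.ball x₀ R))⁻¹ *
        ∫⁻ z in Metric.ball x₀ R ×ˢ I, ∫⁻ y in Metric.ball x₀ R, ‖u (y, z.2) - u z‖ₑ ^ r) := by
        rw [hP, hα, lintegral_smul_measure]
        simp only [lintegral_smul_measure, smul_eq_mul]
        rw [lintegral_const_mul' _ _ (ENNReal.inv_ne_top.2 hB0)]
    _ ≤ (volume (Metric.ball x₀ R ×ˢ I))⁻¹ * ((volume (Metric.ball x₀ R))⁻¹ *
        (ENNReal.ofReal (2 ^ n) * volume (Metric.ball x₀ R) *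
          (ENNReal.ofReal (2 * R) ^ r * E))) := by
        rw [← hball]; gcongr
    _ = ((volume (Metric.ball x₀ R))⁻¹ * volume (Metric.ball x₀ R)) * (ENNReal.ofReal (2 ^ n) *
        ENNReal.ofReal (2 * R) ^ r * ((volume (Metric.ball x₀ R ×ˢ I))⁻¹ * E)) := by ring
    _ = ENNReal.ofReal (2 ^ n * (2 * R) ^ r * ∫ z, ‖Du z‖ ^ r ∂P) := by
        rw [ENNReal.inv_mul_cancel hB0 hB1, one_mul, ← hPE,
          lintegral_enorm_rpow_eq_ofReal hr0 iDr,
          ENNReal.ofReal_rpow_of_nonneg (by positivity) hr0,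
          ENNReal.ofReal_mul (by positivity), ENNReal.ofReal_mul (by positivity)]
    _ ≤ _ := by
        refine ENNReal.ofReal_le_ofReal ?_
        have h0 : 0 ≤ ∫ z, ‖Du z‖ ^ r ∂P := integral_nonneg fun x => by positivity
        have h1 : ∫ z, ‖Du z‖ ^ r ∂P ≤ ∫ z, (‖Du z‖ ^ r + ‖F z‖ ^ r) ∂P :=
          integral_mono iDr (iDr.add iFr) fun z => le_add_of_nonneg_right (by positivity)
        have h2 : (2 : ℝ) ^ r ≤ 2 ^ p := Real.rpow_le_rpow_of_exponent_le (by norm_num) hrp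
        rw [Real.mul_rpow (by norm_num) hR.le]
        calc 2 ^ n * (2 ^ r * R ^ r) * ∫ z, ‖Du z‖ ^ r ∂P
            ≤ 2 ^ n * (2 ^ p * R ^ r) * ∫ z, (‖Du z‖ ^ r + ‖F z‖ ^ r) ∂P := by gcongr
          _ = _ := by ring

theorem pderivS_eq_zero_of_notMem_tsupport {ψ : Spc n × ℝ → ℝ} {z : Spc n × ℝ}
    (hz : z ∉ tsupport ψ) (j : Fin n) : pderivS j ψ z = 0 := by
  have h : (fun y => ψ (y, z.2)) =ᶠ[𝓝 z.1] fun _ => 0 :=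
    (show Continuous fun y : Spc n => (y, z.2) by fun_prop).continuousAt.eventually
      (notMem_tsupport_iff_eventuallyEq.1 hz)
  rw [pderivS, h.fderiv_eq]
  simp

theorem WeakSolution.weakGrad_of_subset {p ν L T : ℝ} {Ω : Set (Spc n)}
    {A : Spc n × ℝ → Vec N → Mat N n → Mat N n} {F : Spc n × ℝ → Mat N n}
    {u : Spc n × ℝ → Vec N} {Du : Spc n × ℝ → Mat N n} (hsol : WeakSolution p ν L T Ω A F u Du)
    {Q : Set (Spc n × ℝ)} (hQ : Q ⊆ Ω ×ˢ Ioo 0 T) {ψ : Spc n × ℝ → ℝ}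
    (hψ : ContDiff ℝ (⊤ : ℕ∞) ψ) (hψc : HasCompactSupport ψ) (hψs : tsupport ψ ⊆ Q)
    (i : Fin N) (j : Fin n) :
    ∫ z in Q, u z i * pderivS j ψ z = - ∫ z in Q, Du z (i, j) * ψ z := by
  have hΩ : MeasurableSet (Ω ×ˢ Ioo 0 T) := (hsol.openΩ.prod isOpen_Ioo).measurableSet
  have h := hsol.weakGrad ψ hψ hψc (hψs.trans hQ) i j
  rwa [setIntegral_eq_of_subset_of_forall_sdiff_eq_zero hΩ hQ (fun z hz => by
      rw [pderivS_eq_zero_of_notMem_tsupport fun h => hz.2 (hψs h), mul_zero]),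
    setIntegral_eq_of_subset_of_forall_sdiff_eq_zero hΩ hQ (fun z hz => by
      rw [image_eq_zero_of_notMem_tsupport fun h => hz.2 (hψs h), mul_zero])] at h

theorem isProbabilityMeasure_inv_smul_restrict {X : Type*} [MeasurableSpace X] {m : Measure X}
    {s : Set X} (h0 : m s ≠ 0) (h1 : m s ≠ ∞) :
    IsProbabilityMeasure ((m s)⁻¹ • m.restrict s) :=
  ⟨by simp [ENNReal.inv_mul_cancel h0 h1]⟩

theorem setAverage_eq_integral_inv_smul {X V : Type*} [MeasurableSpace X] [NormedAddCommGroup V]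
    [NormedSpace ℝ V] (m : Measure X) (s : Set X) (f : X → V) :
    ⨍ x in s, f x ∂m = ∫ x, f x ∂((m s)⁻¹ • m.restrict s) := by
  rw [average, Measure.restrict_apply_univ]

theorem WeakSolution.ae_ae_norm_integral_sub_le_rpow {p ν L T : ℝ} {Ω : Set (Spc n)}
    {A : Spc n × ℝ → Vec N → Mat N n → Mat N n} {F : Spc n × ℝ → Mat N n}
    {u : Spc n × ℝ → Vec N} {Du : Spc n × ℝ → Mat N n} (hsol : WeakSolution p ν L T Ω A F u Du)
    (hp : 2 ≤ p) {q : ℝ} (hq : p - 1 ≤ q) (hqp : q ≤ p) {x₀ : Spc n} {t₀ R ρ : ℝ} (hR : 0 < R)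
    (hρ : 0 < ρ) (hQ : Metric.ball x₀ R ×ˢ Ioo (t₀ - ρ ^ p) (t₀ + ρ ^ p) ⊆ Ω ×ˢ Ioo 0 T)
    {η : Spc n → ℝ} (hη : ContDiff ℝ (⊤ : ℕ∞) η) (hηc : HasCompactSupport η)
    (hηs : tsupport η ⊆ Metric.ball x₀ R) {Cg : ℝ} (hCg0 : 0 ≤ Cg)
    (hCg : ∀ x, ‖gradient η x‖ ≤ Cg / R) {α : Measure (Spc n)} {β : Measure ℝ}
    [IsProbabilityMeasure α] [IsProbabilityMeasure β]
    (hα : α = (volume (Metric.ball x₀ R))⁻¹ • volume.restrict (Metric.ball x₀ R))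
    (hβ : β = (volume (Ioo (t₀ - ρ ^ p) (t₀ + ρ ^ p)))⁻¹ •
      volume.restrict (Ioo (t₀ - ρ ^ p) (t₀ + ρ ^ p)))
    (mDu : MemLp Du (ENNReal.ofReal p) (α.prod β)) (mF : MemLp F (ENNReal.ofReal p) (α.prod β)) :
    ∀ᵐ t' ∂β, ∀ᵐ t ∂β, ‖(∫ x, η x • (‖u (x, t)‖ ^ (p - 2) • u (x, t)) ∂α)
        - ∫ x, η x • (‖u (x, t')‖ ^ (p - 2) • u (x, t')) ∂α‖
      ≤ 4 * max L 1 * Cg * (ρ ^ p / R) *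
        (∫ z, (‖Du z‖ ^ q + ‖F z‖ ^ q) ∂(α.prod β)) ^ ((p - 1) / q) := by
  set B := Metric.ball x₀ R with hB
  set I := Ioo (t₀ - ρ ^ p) (t₀ + ρ ^ p) with hI
  have hB0 : volume B ≠ 0 := (Metric.measure_ball_pos _ _ hR).ne'
  have hB1 : volume B ≠ ∞ := measure_ball_lt_top.ne
  have hρp : 0 < ρ ^ p := by positivity
  have hIv : volume I = ENNReal.ofReal (2 * ρ ^ p) := by
    rw [hI, Real.volume_Ioo]; congr 1; ring
  have hJ := integral_rpow_add_rpow_le mDu mF (by linarith : 0 < p - 1) hq hqp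
  have hav : (volume.real B)⁻¹ * ∫ z in B ×ˢ I, (‖Du z‖ ^ (p - 1) + ‖F z‖ ^ (p - 1)) =
      2 * ρ ^ p * ∫ z, (‖Du z‖ ^ (p - 1) + ‖F z‖ ^ (p - 1)) ∂(α.prod β) := by
    rw [hα, hβ, inv_smul_restrict_prod hB1 hB0, integral_smul_measure, Measure.prod_prod, hIv,
      ← Measure.volume_eq_prod, ENNReal.toReal_inv, ENNReal.toReal_mul,
      ENNReal.toReal_ofReal (by positivity), smul_eq_mul, measureReal_def]
    field_simp
  have hcoef : ∀ t, ∫ x, η x • (‖u (x, t)‖ ^ (p - 2) • u (x, t)) ∂α =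
      (volume.real B)⁻¹ • ∫ x in B, η x • (‖u (x, t)‖ ^ (p - 2) • u (x, t)) := fun t => by
    rw [hα, integral_smul_measure, ENNReal.toReal_inv, measureReal_def]
  have key := hsol.ae_ae_norm_integral_sub_le hp isOpen_Ioo (convex_Ioo _ _) hQ hη hηc hηs hCg
  have hβac : ∀ {Pr : ℝ → Prop}, (∀ᵐ t ∂(volume.restrict I), Pr t) → ∀ᵐ t ∂β, Pr t := fun h => by
    rw [hβ]; exact Measure.ae_smul_measure h _
  filter_upwards [hβac key] with t' ht'
  filter_upwards [hβac ht'] with t ht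
  rw [hcoef, hcoef, ← smul_sub, norm_smul, Real.norm_of_nonneg (by positivity)]
  calc _ ≤ (volume.real B)⁻¹ * (max L 1 * (Cg / R) *
        ∫ z in B ×ˢ I, (‖Du z‖ ^ (p - 1) + ‖F z‖ ^ (p - 1))) := by gcongr
    _ = max L 1 * (Cg / R) * (2 * ρ ^ p *
        ∫ z, (‖Du z‖ ^ (p - 1) + ‖F z‖ ^ (p - 1)) ∂(α.prod β)) := by rw [← hav]; ring
    _ ≤ max L 1 * (Cg / R) * (2 * ρ ^ p *
        (2 * (∫ z, (‖Du z‖ ^ q + ‖F z‖ ^ q) ∂(α.prod β)) ^ ((p - 1) / q))) := by gcongr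
    _ = _ := by ring

/-- Parabolic Poincaré inequality, superquadratic case: let `p ≥ 2` and `u` a weak solution.
On any cylinder `Q_ρ^{(μ)}(z₀) ⊆ Ω_T` which is both `μ`-sub-intrinsic and `μ`-super-intrinsic
with constant `K`, for any `q ∈ [p−1, p]`:
`⨍⨍ |u − (u)|^q/(μ^{q(2−p)/p}ρ^q) ≤ c ⨍⨍ (|Du|^q + |F|^q)` with `c = c(n, p, L, K)`. -/
theorem parabolic_poincare_superquadratic (n : ℕ) (p L K : ℝ) (hp : 2 ≤ p) (hK : 1 ≤ K) :
    ∃ c > 0, ∀ (N : ℕ) (ν T : ℝ) (Ω : Set (Spc n))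
      (A : Spc n × ℝ → Vec N → Mat N n → Mat N n) (F : Spc n × ℝ → Mat N n)
      (u : Spc n × ℝ → Vec N) (Du : Spc n × ℝ → Mat N n),
      WeakSolution p ν L T Ω A F u Du →
      ∀ (z₀ : Spc n × ℝ) (ρ μ : ℝ), 0 < ρ → 0 < μ →
        parCyl p μ ρ z₀ ⊆ Ω ×ˢ Ioo 0 T →
        SubIntrinsic p K μ ρ z₀ u Du F →
        SuperIntrinsic p K μ ρ z₀ u Du F →
        ∀ q ∈ Icc (p - 1) p,
          ⨍ z in parCyl p μ ρ z₀,
              ‖u z - ⨍ w in parCyl p μ ρ z₀, u w‖ ^ q / (μ ^ (q * (2 - p) / p) * ρ ^ q)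
            ≤ c * ⨍ z in parCyl p μ ρ z₀, (‖Du z‖ ^ q + ‖F z‖ ^ q) := by
  obtain ⟨Cη, Cg, hCη, hCg, hcut⟩ := exists_normalized_cutoff n
  have hC₁ : (1 : ℝ) ≤ 2 ^ n * 2 ^ p := one_le_mul_of_one_le_of_one_le
    (one_le_pow₀ (by norm_num)) (Real.one_le_rpow (by norm_num) (by linarith))
  have hC₃ : 1 ≤ 4 * max L 1 * Cg := one_le_mul_of_one_le_of_one_le
    (one_le_mul_of_one_le_of_one_le (by norm_num) (le_max_right _ _)) hCg
  obtain ⟨C, hC, hcore⟩ := exists_lintegral_enorm_sub_rpow_le hp hK hCη hC₁ hC₃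
  refine ⟨2 ^ p * (2 * C), by positivity, ?_⟩
  intro N ν T Ω A F u Du hsol z₀ ρ μ hρ hμ hQ _ hsup q hqI
  obtain ⟨hq, hqp⟩ := hqI
  have hq0 : 0 < q := by linarith
  have hp0 : 0 < p := by linarith
  set R : ℝ := μ ^ ((2 - p) / p) * ρ with hR
  have hR0 : 0 < R := by positivity
  have hRr : ∀ r : ℝ, R ^ r = μ ^ (r * (2 - p) / p) * ρ ^ r := fun r => by
    rw [hR, Real.mul_rpow (by positivity) hρ.le, ← Real.rpow_mul hμ.le]
    congr 2; ring
  have hcyl : parCyl p μ ρ z₀ =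
      Metric.ball z₀.1 R ×ˢ Ioo (z₀.2 - ρ ^ p) (z₀.2 + ρ ^ p) := by
    rw [parCyl, if_neg (not_lt.2 hp)]
  unfold SuperIntrinsic at hsup
  simp only [setAverage_eq_integral_inv_smul] at hsup ⊢
  rw [hcyl] at hQ hsup ⊢
  set B := Metric.ball z₀.1 R with hB
  set I := Ioo (z₀.2 - ρ ^ p) (z₀.2 + ρ ^ p) with hI
  have hρp : 0 < ρ ^ p := by positivity
  have hB0 : volume B ≠ 0 := (Metric.measure_ball_pos _ _ hR0).ne'
  have hB1 : volume B ≠ ∞ := measure_ball_lt_top.ne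
  have hI0 : volume I ≠ 0 := (isOpen_Ioo.measure_pos _ (nonempty_Ioo.2 (by linarith))).ne'
  have hI1 : volume I ≠ ∞ := measure_Ioo_lt_top.ne
  set α : Measure (Spc n) := (volume B)⁻¹ • volume.restrict B with hα
  set β : Measure ℝ := (volume I)⁻¹ • volume.restrict I with hβ
  have hαp : IsProbabilityMeasure α := isProbabilityMeasure_inv_smul_restrict hB0 hB1
  have hβp : IsProbabilityMeasure β := isProbabilityMeasure_inv_smul_restrict hI0 hI1
  have hP : (volume (B ×ˢ I))⁻¹ • volume.restrict (B ×ˢ I) = α.prod β := by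
    rw [hα, hβ, inv_smul_restrict_prod hB1 hB0, Measure.volume_eq_prod]
  rw [hP] at hsup ⊢
  have hfin := hsol.isFiniteMeasure_restrict hQ
  have hle : volume.restrict (B ×ˢ I) ≤ volume.restrict (Ω ×ˢ Ioo 0 T) :=
    Measure.restrict_mono hQ le_rfl
  have hQ0 : (volume (B ×ˢ I))⁻¹ ≠ ∞ := by
    rw [ENNReal.inv_ne_top, Measure.volume_eq_prod, Measure.prod_prod]
    exact mul_ne_zero hB0 hI0
  have hmem : ∀ {V : Type} [NormedAddCommGroup V] {f : Spc n × ℝ → V},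
      MemLp f (ENNReal.ofReal p) (volume.restrict (B ×ˢ I)) →
      MemLp f (ENNReal.ofReal p) (α.prod β) := fun hf => by
    rw [← hP]; exact hf.smul_measure hQ0
  have hone : (1 : ℝ≥0∞) ≤ ENNReal.ofReal p := by
    rw [ENNReal.one_le_ofReal]; linarith
  have mu' := hsol.memLp_u.mono_measure hle
  have mDu' := hsol.memLp_Du.mono_measure hle
  have mu := hmem mu'
  have mDu := hmem mDu'
  have mF := hmem (hsol.memLp_F.mono_measure hle)
  obtain ⟨η, hη, hηc, hηs, hη0, hηC, hη1, hηg⟩ := hcut z₀.1 R hR0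
  rw [setAverage_eq_integral_inv_smul] at hη1
  have hpoin : ∀ {r : ℝ}, p - 1 ≤ r → r ≤ p →
      ∫⁻ z, ∫⁻ y, ‖u (y, z.2) - u z‖ₑ ^ r ∂α ∂(α.prod β) ≤
      ENNReal.ofReal (2 ^ n * 2 ^ p * (R ^ r * ∫ z, (‖Du z‖ ^ r + ‖F z‖ ^ r) ∂(α.prod β))) :=
    fun hr hrp => poincare_normalized hsol.measu hsol.measDu z₀.1 hR0 isOpen_Ioo (convex_Ioo _ _)
      (mu'.integrable hone) (mDu'.integrable hone)
      (fun ψ hψ hψc hψs i j => hsol.weakGrad_of_subset hQ hψ hψc hψs i j) hα hP.symm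
      (by linarith) hrp (integrable_norm_rpow_of_memLp mDu (by linarith) hrp)
      (integrable_norm_rpow_of_memLp mF (by linarith) hrp)
  have hJ0 : ∀ r : ℝ, 0 ≤ ∫ z, (‖Du z‖ ^ r + ‖F z‖ ^ r) ∂(α.prod β) := fun r =>
    integral_nonneg fun z => by positivity
  have hJJ : (∫ z, (‖Du z‖ ^ q + ‖F z‖ ^ q) ∂(α.prod β)) ^ (p / q) ≤
      2 ^ p * ∫ z, (‖Du z‖ ^ p + ‖F z‖ ^ p) ∂(α.prod β) := by
    have h1 := Real.rpow_le_rpow (hJ0 q) (integral_rpow_add_rpow_le mDu mF hq0 hqp le_rfl)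
      (by positivity : 0 ≤ p / q)
    rw [Real.mul_rpow (by norm_num) (Real.rpow_nonneg (hJ0 p) _), ← Real.rpow_mul (hJ0 p),
      show q / p * (p / q) = 1 by field_simp, Real.rpow_one] at h1
    refine h1.trans (mul_le_mul_of_nonneg_right ?_ (hJ0 p))
    exact Real.rpow_le_rpow_of_exponent_le (by norm_num) (div_le_self hp0.le (by linarith))
  have hsup' : μ ^ (2 : ℝ) * ρ ^ p * ∫ z, (‖Du z‖ ^ p + ‖F z‖ ^ p) ∂(α.prod β) ≤
      K * ∫ z, ‖u z‖ ^ p ∂(α.prod β) ∨ μ ^ p ≤ K := by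
    refine hsup.imp_left fun h => ?_
    rw [max_eq_left hp, integral_div, mul_div_assoc', le_div_iff₀ (by positivity)] at h
    refine le_of_eq_of_le ?_ h
    have : μ ^ (2 : ℝ) = μ ^ p * μ ^ (2 - p) := by
      rw [← Real.rpow_add hμ]; congr 1; ring
    rw [this]
    ring
  obtain ⟨b, hb⟩ := hcore n N α β hαp hβp u η q μ ρ R _ _ hsol.measu mu hη.continuous.measurable
    hη0 hηC hη1 hq hqp hμ hρ hR (hJ0 q) (hJ0 p) (hpoin hq hqp) (hpoin (by linarith) le_rfl) hJJ
    hsup' (hsol.ae_ae_norm_integral_sub_le_rpow hp hq hqp hR0 hρ hQ hη hηc hηs (by linarith) hηg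
      hα hβ mDu mF)
  have hfinal := (lintegral_enorm_sub_integral_rpow_le (mu.integrable hone)
    (by linarith) hqp b).trans (mul_le_mul_right (mul_le_mul_right hb 2) (2 ^ p))
  have mum : MemLp (fun z => u z - ∫ w, u w ∂(α.prod β)) (ENNReal.ofReal p) (α.prod β) :=
    mu.sub (memLp_const _)
  have two_mul_ofReal : ∀ x : ℝ, (2 : ℝ≥0∞) * ENNReal.ofReal x = ENNReal.ofReal (2 * x) :=
    fun x => by rw [ENNReal.ofReal_mul (by norm_num)]; simp
  rw [lintegral_enorm_rpow_eq_ofReal hq0.le (integrable_norm_rpow_of_memLp mum hq0 hqp),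
    show (2 : ℝ≥0∞) ^ p = ENNReal.ofReal (2 ^ p) by
      rw [← ENNReal.ofReal_rpow_of_nonneg (by norm_num) hp0.le]; simp,
    two_mul_ofReal, ← ENNReal.ofReal_mul (by positivity), ENNReal.ofReal_le_ofReal_iff (by
      have := hJ0 q
      positivity)] at hfinal
  rw [← hRr q, integral_div, div_le_iff₀ (by positivity)]
  refine hfinal.trans_eq ?_
  ring
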